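/- arXiv:math/0509474 — 3 statements merged into one kernel-verified Lean document; each statement's English description precedes it below -/
import Mathlib

section
/- Let q be odd and let F be the set of all self-dual codes in F_q^{2n} (assumed nonempty). Then for each 0 ≤ m ≤ n, the subspace Y_m is exactly the eigenspace of the Kneser–Hecke operator T with eigenvalue ν_m = (q^{n−m} − q^m)/(q−1). -/
noncomputable section

namespace KneserHeckeCodes

open Finset

variable {F : Type} [Field F] [Fintype F]

/-- The all-ones vector. -/
def allOnes (F : Type) [One F] (N : ℕ) : Fin N → F := fun _ => 1

/-- The dual code with respect to the (bilinear or Hermitian) form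
`b(x,y) = ∑ i, x i * f (y i)`. -/
def dualCode {N : ℕ} (f : F → F) (C : Submodule F (Fin N → F)) : Submodule F (Fin N → F) where
  carrier := {v | ∀ c ∈ C, ∑ i, v i * f (c i) = 0}
  add_mem' := by
    intro a b ha hb c hc
    have h1 := ha c hc
    have h2 := hb c hc
    change ∑ i, a i * f (c i) = 0 at h1
    change ∑ i, b i * f (c i) = 0 at h2
    change ∑ i, (a + b) i * f (c i) = 0
    simp [Pi.add_apply, add_mul, Finset.sum_add_distrib, h1, h2]
  zero_mem' := by
    intro c hc
    simp
  smul_mem' := by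
    intro r a ha c hc
    have h := ha c hc
    change ∑ i, a i * f (c i) = 0 at h
    change ∑ i, (r • a) i * f (c i) = 0
    simp [Pi.smul_apply, smul_eq_mul, mul_assoc, ← Finset.mul_sum, h]

/-- Action of a coordinate permutation on a code. -/
def permCode {N : ℕ} (π : Equiv.Perm (Fin N)) (C : Submodule F (Fin N → F)) :
    Submodule F (Fin N → F) :=
  C.map (LinearMap.funLeft F F π)

/-- Permutation equivalence of codes. -/
def equivCode {N : ℕ} (C D : Submodule F (Fin N → F)) : Prop :=
  ∃ π : Equiv.Perm (Fin N), permCode π C = D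

/-- The order of the automorphism group of a code. -/
def autCard {N : ℕ} (C : Submodule F (Fin N → F)) : ℕ :=
  Nat.card {π : Equiv.Perm (Fin N) // permCode π C = C}

/-- `mon c v` is the number of columns of the `m × N` matrix with rows `c` equal to `v`. -/
def mon {m N : ℕ} (c : Fin m → (Fin N → F)) (v : Fin m → F) : ℕ :=
  Nat.card {i : Fin N // ∀ j, c j i = v j}

/-- `aX X C` is the number of `m`-tuples of codewords of `C` with monomial `X`. -/
def aX {m N : ℕ} (X : (Fin m → F) → ℕ) (C : Submodule F (Fin N → F)) : ℕ :=
  Nat.card {c : Fin m → (Fin N → F) // (∀ j, c j ∈ C) ∧ mon c = X}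

/-- The set `M_m` of monomials of degree `N` in genus `m`. -/
def MmSet (F : Type) [Fintype F] (m N : ℕ) : Set ((Fin m → F) → ℕ) :=
  {X | ∑ v, X v = N}

/-- The rank of a monomial. -/
def rkX (F : Type) [Field F] {m : ℕ} (X : (Fin m → F) → ℕ) : ℕ :=
  Module.finrank F (Submodule.span F {v : Fin m → F | 0 < X v})

/-- The set `M*_m` of monomials of degree `N` and full rank `m`. -/
def MstarSet (F : Type) [Field F] [Fintype F] (m N : ℕ) : Set ((Fin m → F) → ℕ) :=
  {X | X ∈ MmSet F m N ∧ rkX F X = m}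

instance finiteSubmodule {N : ℕ} : Finite (Submodule F (Fin N → F)) :=
  Finite.of_injective (fun C => (C : Set (Fin N → F))) SetLike.coe_injective

/-- The set of equivalence classes of codes in the family `𝓕`. -/
abbrev ClassesB {N : ℕ} (𝓕 : Set (Submodule F (Fin N → F))) : Type :=
  Quot (fun C D : 𝓕 => equivCode C.1 D.1)

/-- The equivalence class of a code. -/
def clsOf {N : ℕ} {𝓕 : Set (Submodule F (Fin N → F))} (C : 𝓕) : ClassesB 𝓕 :=
  Quot.mk _ C

/-- A representative of an equivalence class. -/
def repB {N : ℕ} {𝓕 : Set (Submodule F (Fin N → F))} (b : ClassesB 𝓕) : 𝓕 :=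
  Quot.out b

/-- The Hermitian inner product on `V` with `([C],[D]) = |Aut C| δ_{[C],[D]}`. -/
def innerV {N : ℕ} (𝓕 : Set (Submodule F (Fin N → F))) (v w : ClassesB 𝓕 → ℂ) : ℂ :=
  letI : Fintype (ClassesB 𝓕) := Fintype.ofFinite _
  ∑ b : ClassesB 𝓕, (starRingEnd ℂ) (v b) * w b * (autCard (repB b).1 : ℂ)

/-- The `k`-th Kneser-Hecke operator `T_k` on `V`, where `n` is the dimension of the codes:
`T_k [C] = ∑_{D ∈ 𝓕, dim (C ⊓ D) = n - k} [D]`. -/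
def heckeT {N : ℕ} (𝓕 : Set (Submodule F (Fin N → F))) (n k : ℕ)
    (v : ClassesB 𝓕 → ℂ) : ClassesB 𝓕 → ℂ :=
  letI : Fintype (ClassesB 𝓕) := Fintype.ofFinite _
  fun b' => ∑ b : ClassesB 𝓕, v b *
    (Nat.card {D : 𝓕 // Module.finrank F ↥((repB b).1 ⊓ D.1) + k = n ∧ clsOf D = b'} : ℂ)

/-- The linear extension of `a_X` to `V`. -/
def aXc {N m : ℕ} (𝓕 : Set (Submodule F (Fin N → F))) (X : (Fin m → F) → ℕ)
    (v : ClassesB 𝓕 → ℂ) : ℂ :=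
  letI : Fintype (ClassesB 𝓕) := Fintype.ofFinite _
  ∑ b : ClassesB 𝓕, v b * (aX X (repB b).1 : ℂ)

/-- `V_m`, the joint kernel of all `a_X`, `X ∈ M_m`. -/
def VmSet {N : ℕ} (𝓕 : Set (Submodule F (Fin N → F))) (m : ℕ) : Set (ClassesB 𝓕 → ℂ) :=
  {v | ∀ X ∈ MmSet F m N, aXc 𝓕 X v = 0}

/-- `V_{m-1}` (with `V_{-1} = V`). -/
def VmPred {N : ℕ} (𝓕 : Set (Submodule F (Fin N → F))) (m : ℕ) : Set (ClassesB 𝓕 → ℂ) :=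
  match m with
  | 0 => Set.univ
  | m + 1 => VmSet 𝓕 m

/-- `W_m = V_m^⊥`. -/
def WmSet {N : ℕ} (𝓕 : Set (Submodule F (Fin N → F))) (m : ℕ) : Set (ClassesB 𝓕 → ℂ) :=
  {w | ∀ v ∈ VmSet 𝓕 m, innerV 𝓕 w v = 0}

/-- `Y_m = W_m ∩ V_{m-1}`. -/
def YmSet {N : ℕ} (𝓕 : Set (Submodule F (Fin N → F))) (m : ℕ) : Set (ClassesB 𝓕 → ℂ) :=
  WmSet 𝓕 m ∩ VmPred 𝓕 m

/-- `∑_{E ∈ E_C(c)} α_E`, counted as the number of pairs `(E, D)` with `E ≤ C` of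
dimension `n-1` containing all entries of `c` and `D ∈ 𝓕` with `D ⊓ C = E`. -/
def pairCount {N : ℕ} (𝓕 : Set (Submodule F (Fin N → F))) (n : ℕ)
    (C : Submodule F (Fin N → F)) {m : ℕ} (c : Fin m → (Fin N → F)) : ℕ :=
  Nat.card {ED : Submodule F (Fin N → F) × 𝓕 //
    ED.1 ≤ C ∧ Module.finrank F ↥ED.1 + 1 = n ∧ (∀ j, c j ∈ ED.1) ∧ ED.2.1 ⊓ C = ED.1}

/-- Condition ⋆ at level `m` for the subset `M⁰ ⊆ M*_m` with constant `α`. -/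
def CondStar {N : ℕ} (𝓕 : Set (Submodule F (Fin N → F))) (n m : ℕ)
    (M0 : Set ((Fin m → F) → ℕ)) (α : ℕ) : Prop :=
  M0 ⊆ MstarSet F m N ∧
  VmSet 𝓕 m = {v | v ∈ VmPred 𝓕 m ∧ ∀ X ∈ M0, aXc 𝓕 X v = 0} ∧
  ∀ C ∈ 𝓕, ∀ c : Fin m → (Fin N → F), (∀ j, c j ∈ C) → mon c ∈ M0 →
    pairCount 𝓕 n C c = α

/-- The genus-`m` complete weight enumerator. -/
def cwe {N : ℕ} (m : ℕ) (C : Submodule F (Fin N → F)) : MvPolynomial (Fin m → F) ℂ :=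
  letI : Fintype C := Fintype.ofFinite _
  ∑ c : Fin m → C, MvPolynomial.monomial
    (Finsupp.equivFunOnFinite.symm (mon (fun j => (c j : Fin N → F)))) (1 : ℂ)

end KneserHeckeCodes

open KneserHeckeCodes

/-!
A vector `v ∈ V` lifts to the permutation-invariant function `D ↦ |Aut D| · v([D])` on self-dual
codes. Under this lift `T` becomes the adjacency operator `A` of the neighbour graph, and the values
`a_X(v)`, `X ∈ M_m`, become (up to positive factors) the sums `s_U = ∑_{D ⊇ U} |Aut D| · v([D])`
over the self-dual codes containing a subspace `U` of dimension at most `m`.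

For self-orthogonal `U`, a self-dual `C ⊇ U` has one neighbour containing `U` for each hyperplane of
`C` containing `U`; a self-dual `C ⊉ U` has one neighbour containing `U` if `C ∩ U` is a hyperplane
of `U`, and none otherwise. Hence `s_U ∘ A = ν_{dim U} · s_U + ∑ s_E`, summed over the hyperplanes
`E` of `U`, so `T - ν_m` maps `V_{m-1}` into `V_m`. As `T` is self-adjoint and the `ν_m` are
distinct real numbers, the orthogonal complement of `V_m` in `V_{m-1}` is the `ν_m`-eigenspace.
-/

namespace KneserHeckeCodes

open Finset Module

section Hyperplanes

variable {K V : Type*} [DivisionRing K] [AddCommGroup V] [Module K V]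

theorem sup_span_singleton_eq_of_covBy {E C : Submodule K V} (h : E ⋖ C) {x : V} (hxC : x ∈ C)
    (hxE : x ∉ E) : E ⊔ K ∙ x = C := by
  have hlt : E < E ⊔ K ∙ x := sup_comm E (K ∙ x) ▸ (Submodule.covBy_span_singleton_sup hxE).lt
  have hle : E ⊔ K ∙ x ≤ C := sup_le h.le ((Submodule.span_singleton_le_iff_mem x C).2 hxC)
  exact (h.eq_or_eq hlt.le hle).resolve_left hlt.ne'

variable [FiniteDimensional K V]

theorem finrank_add_one_of_covBy {E C : Submodule K V} (h : E ⋖ C) :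
    finrank K E + 1 = finrank K C := by
  obtain ⟨x, hxC, hxE⟩ := SetLike.exists_of_lt h.lt
  rw [← sup_span_singleton_eq_of_covBy h hxC hxE, Submodule.finrank_sup_span_singleton hxE]

theorem covBy_iff_finrank_add_one_eq {E C : Submodule K V} (hEC : E ≤ C) :
    E ⋖ C ↔ finrank K E + 1 = finrank K C := by
  refine ⟨finrank_add_one_of_covBy, fun h => ⟨?_, fun H hEH hHC => ?_⟩⟩
  · exact hEC.lt_of_ne fun hE => by subst hE; omega
  · have := Submodule.finrank_lt_finrank_of_lt hEH
    have := Submodule.finrank_lt_finrank_of_lt hHC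
    omega

theorem finrank_map_mkQ_add_finrank {U C : Submodule K V} (hUC : U ≤ C) :
    finrank K (C.map U.mkQ) + finrank K U = finrank K C := by
  have hU := U.finrank_quotient_add_finrank
  have hC := C.finrank_quotient_add_finrank
  have hCU := (C.map U.mkQ).finrank_quotient_add_finrank
  rw [(Submodule.quotientQuotientEquivQuotient U C hUC).finrank_eq] at hCU
  omega

end Hyperplanes

section HyperplaneCounting

variable {K V : Type*} [Field K] [Finite K] [AddCommGroup V] [Module K V] [FiniteDimensional K V]

theorem card_submodule_isCoatom :
    Nat.card {H : Submodule K V // IsCoatom H} = ∑ i ∈ range (finrank K V), Nat.card K ^ i := by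
  have e : {H : Submodule K V // IsCoatom H} ≃
      {L : Submodule K (Dual K V) // finrank K L = 1} :=
    (Subspace.orderIsoFiniteDimensional.toEquiv.trans OrderDual.ofDual).subtypeEquiv fun H => by
      rw [← Submodule.isAtom_iff_finrank_eq_one, ← isCoatom_dual_iff_isAtom,
        ← (Subspace.orderIsoFiniteDimensional (K := K) (V := V)).isCoatom_iff H]
      rfl
  rw [Nat.card_congr (e.trans (Projectivization.equivSubmodule K (Dual K V)).symm),
    Projectivization.card_of_finrank K (Dual K V) Subspace.dual_finrank_eq]

theorem card_submodule_covBy (C : Submodule K V) :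
    Nat.card {E : Submodule K V // E ⋖ C} = ∑ i ∈ range (finrank K C), Nat.card K ^ i := by
  rw [← card_submodule_isCoatom]
  have e₁ : {H : Submodule K C // IsCoatom H} ≃ {E : Set.Iic C // IsCoatom E} :=
    (Submodule.mapIic C).toEquiv.subtypeEquiv fun H => ((Submodule.mapIic C).isCoatom_iff H).symm
  have e₂ : {E : Set.Iic C // IsCoatom E} ≃ {E : Submodule K V // E ⋖ C} :=
    (Equiv.subtypeEquivRight fun E => Set.Iic.isCoatom_iff).trans
      (Equiv.subtypeSubtypeEquivSubtype (p := (· ≤ C)) (q := (· ⋖ C)) CovBy.le)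
  exact (Nat.card_congr (e₁.trans e₂)).symm

theorem card_submodule_covBy_of_le {U C : Submodule K V} (hUC : U ≤ C) :
    Nat.card {E : Submodule K V // U ≤ E ∧ E ⋖ C} =
      ∑ i ∈ range (finrank K C - finrank K U), Nat.card K ^ i := by
  let φ := Submodule.comapMkQOrderEmbedding U
  have hφ : Set.range φ = Set.Ici U := by
    ext E
    exact ⟨fun ⟨H, hH⟩ => hH ▸ Submodule.le_comap_mkQ U H,
      fun hE => ⟨E.map U.mkQ, by simpa [φ] using hE⟩⟩
  have hC : φ (C.map U.mkQ) = C := by simpa [φ] using hUC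
  have hcovBy (E) : φ E ⋖ C ↔ E ⋖ C.map U.mkQ := by
    conv_lhs => rw [← hC]
    exact Set.OrdConnected.apply_covBy_apply_iff φ (hφ ▸ Set.ordConnected_Ici)
  have himage : {E | U ≤ E ∧ E ⋖ C} = φ '' {H | H ⋖ C.map U.mkQ} := by
    ext E
    rw [Set.mem_ofPred_eq, ← Set.mem_Ici, ← hφ]
    constructor
    · rintro ⟨⟨H, rfl⟩, hH⟩
      exact ⟨H, (hcovBy H).1 hH, rfl⟩
    · rintro ⟨H, hH, rfl⟩
      exact ⟨⟨H, rfl⟩, (hcovBy H).2 hH⟩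
  calc Nat.card {E // U ≤ E ∧ E ⋖ C}
      = Nat.card (φ '' {H | H ⋖ C.map U.mkQ}) := by rw [← himage]; rfl
    _ = Nat.card {H // H ⋖ C.map U.mkQ} := Nat.card_image_of_injective φ.injective _
    _ = ∑ i ∈ range (finrank K C - finrank K U), Nat.card K ^ i := by
      rw [card_submodule_covBy, ← finrank_map_mkQ_add_finrank hUC, Nat.add_sub_cancel]

end HyperplaneCounting

section SelfDual

variable {K V : Type*} [Field K] [AddCommGroup V] [Module K V] {B : LinearMap.BilinForm K V}
  {C D D' E U : Submodule K V} {x : V}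

/-- The subspaces equal to their own orthogonal complement: the points of the dual polar space of
`B`, whose neighbour relation is `C ⊓ D ⋖ C`. -/
def selfDualSubspaces (B : LinearMap.BilinForm K V) : Set (Submodule K V) :=
  {C | B.orthogonal C = C}

/-- The subspace `(C ∩ x^⊥) + ⟨x⟩`, the only possible neighbour of a self-dual `C ∌ x` that
contains `x`. -/
def neighbourThrough (B : LinearMap.BilinForm K V) (C : Submodule K V) (x : V) : Submodule K V :=
  C ⊓ LinearMap.ker (B x) ⊔ K ∙ x

theorem apply_eq_zero_of_mem_selfDual (hC : C ∈ selfDualSubspaces B) {c d : V} (hc : c ∈ C)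
    (hd : d ∈ C) : B c d = 0 :=
  (show B.orthogonal C = C from hC).ge hd c hc

theorem exists_apply_ne_zero_of_notMem (hB : B.IsSymm) (hC : C ∈ selfDualSubspaces B)
    (hx : x ∉ C) : ∃ c ∈ C, B x c ≠ 0 := by
  by_contra! h
  exact hx ((show B.orthogonal C = C from hC).le fun c hc => hB.eq c x ▸ h c hc)

theorem eq_of_le_of_selfDual (hC : C ∈ selfDualSubspaces B) (hD : D ∈ selfDualSubspaces B)
    (h : C ≤ D) : C = D :=
  h.antisymm <| hC ▸ hD ▸ LinearMap.BilinForm.orthogonal_le h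

theorem inf_ker_covBy (hB : B.IsSymm) (hC : C ∈ selfDualSubspaces B) (hx : x ∉ C) :
    C ⊓ LinearMap.ker (B x) ⋖ C := by
  obtain ⟨c, hc, hxc⟩ := exists_apply_ne_zero_of_notMem hB hC hx
  have hker : IsCoatom (LinearMap.ker (B x)) :=
    LinearMap.isCoatom_ker_of_surjective (LinearMap.surjective fun h => hxc (by simp [h]))
  have hsup : LinearMap.ker (B x) ⊔ C = ⊤ :=
    (hker.le_iff.1 le_sup_left).resolve_right fun h => hxc (h.le (Submodule.mem_sup_right hc))
  rw [inf_comm]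
  exact CovBy.inf_of_sup_left (hsup ▸ hker.covBy_top)

theorem neighbourThrough_le_orthogonal (hB : B.IsSymm) (hC : C ∈ selfDualSubspaces B)
    (hxx : B x x = 0) : neighbourThrough B C x ≤ B.orthogonal (neighbourThrough B C x) := by
  have hE {e} (he : e ∈ C ⊓ LinearMap.ker (B x)) : B x e = 0 := he.2
  intro y hy z hz
  obtain ⟨e, he, _, hax, rfl⟩ := Submodule.mem_sup.1 hy
  obtain ⟨e', he', _, hax', rfl⟩ := Submodule.mem_sup.1 hz
  obtain ⟨a, rfl⟩ := Submodule.mem_span_singleton.1 hax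
  obtain ⟨a', rfl⟩ := Submodule.mem_span_singleton.1 hax'
  simp [hB.eq e' x, hE he, hE he', hxx, apply_eq_zero_of_mem_selfDual hC he'.1 he.1]

theorem inf_neighbourThrough (hx : x ∉ C) :
    C ⊓ neighbourThrough B C x = C ⊓ LinearMap.ker (B x) := by
  rw [neighbourThrough, inf_comm, sup_inf_assoc_of_le _ inf_le_left,
    ((Submodule.disjoint_span_singleton_of_notMem hx).symm).eq_bot, sup_bot_eq]

theorem inf_neighbourThrough_covBy (hB : B.IsSymm) (hC : C ∈ selfDualSubspaces B) (hx : x ∉ C) :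
    C ⊓ neighbourThrough B C x ⋖ C :=
  inf_neighbourThrough (B := B) hx ▸ inf_ker_covBy hB hC hx

theorem le_neighbourThrough (hU : U ≤ B.orthogonal U) (hxU : x ∈ U) (hxC : x ∉ C)
    (hUC : C ⊓ U ⋖ U) : U ≤ neighbourThrough B C x := by
  rw [← sup_span_singleton_eq_of_covBy hUC hxU fun h => hxC h.1]
  exact sup_le_sup_right (le_inf inf_le_left fun y hy => hU hy.2 x hxU) _

-- An isotropic `c + d` satisfies `2 * B c d = 0`, and `C` is spanned by `C ⊓ D` and any `c ∉ D`.
theorem mem_or_mem_of_mem_sup (hB : B.IsSymm) (h2 : (2 : K) ≠ 0)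
    (hC : C ∈ selfDualSubspaces B) (hD : D ∈ selfDualSubspaces B) (hCD : C ⊓ D ⋖ C)
    (hx : x ∈ C ⊔ D) (hxx : B x x = 0) : x ∈ C ∨ x ∈ D := by
  obtain ⟨c, hc, d, hd, rfl⟩ := Submodule.mem_sup.1 hx
  have hcd : B d c = 0 := by
    simpa [apply_eq_zero_of_mem_selfDual hC hc hc, apply_eq_zero_of_mem_selfDual hD hd hd,
      hB.eq c d, ← two_mul, h2] using hxx
  by_cases hcD : c ∈ D
  · exact Or.inr (D.add_mem hcD hd)
  · have hCle : C ≤ LinearMap.ker (B d) := by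
      rw [← sup_span_singleton_eq_of_covBy hCD hc fun h => hcD h.2]
      exact sup_le (fun y hy => apply_eq_zero_of_mem_selfDual hD hd hy.2)
        ((Submodule.span_singleton_le_iff_mem c _).2 hcd)
    refine Or.inl (C.add_mem hc ?_)
    by_contra hdC
    obtain ⟨y, hy, hdy⟩ := exists_apply_ne_zero_of_notMem hB hC hdC
    exact hdy (hCle hy)

section Nondegenerate

variable [FiniteDimensional K V]

theorem two_mul_finrank_of_selfDual (hB₀ : B.Nondegenerate)
    (hC : C ∈ selfDualSubspaces B) : 2 * finrank K C = finrank K V := by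
  have h := LinearMap.BilinForm.finrank_orthogonal hB₀ C
  rw [hC] at h
  have := C.finrank_le
  omega

theorem finrank_eq_of_selfDual (hB₀ : B.Nondegenerate)
    (hC : C ∈ selfDualSubspaces B) (hD : D ∈ selfDualSubspaces B) :
    finrank K C = finrank K D := by
  have := two_mul_finrank_of_selfDual hB₀ hC
  have := two_mul_finrank_of_selfDual hB₀ hD
  omega

theorem mem_selfDualSubspaces_of_le_orthogonal (hB₀ : B.Nondegenerate)
    (hC : C ∈ selfDualSubspaces B) (hD : D ≤ B.orthogonal D) (hdim : finrank K D = finrank K C) :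
    D ∈ selfDualSubspaces B := by
  refine (Submodule.eq_of_le_of_finrank_eq hD ?_).symm
  have := two_mul_finrank_of_selfDual hB₀ hC
  rw [LinearMap.BilinForm.finrank_orthogonal hB₀]
  omega

theorem inf_covBy_right_of_selfDual (hB₀ : B.Nondegenerate)
    (hC : C ∈ selfDualSubspaces B) (hD : D ∈ selfDualSubspaces B) (hCD : C ⊓ D ⋖ C) :
    C ⊓ D ⋖ D := by
  rw [covBy_iff_finrank_add_one_eq inf_le_right, ← finrank_eq_of_selfDual hB₀ hC hD]
  exact finrank_add_one_of_covBy hCD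

theorem neighbourThrough_mem_selfDualSubspaces (hB : B.IsSymm) (hB₀ : B.Nondegenerate)
    (hC : C ∈ selfDualSubspaces B) (hxx : B x x = 0) (hx : x ∉ C) :
    neighbourThrough B C x ∈ selfDualSubspaces B := by
  refine mem_selfDualSubspaces_of_le_orthogonal hB₀ hC
    (neighbourThrough_le_orthogonal hB hC hxx) ?_
  rw [neighbourThrough, Submodule.finrank_sup_span_singleton fun h => hx (Submodule.mem_inf.1 h).1,
    finrank_add_one_of_covBy (inf_ker_covBy hB hC hx)]

theorem eq_neighbourThrough (hB : B.IsSymm) (hB₀ : B.Nondegenerate)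
    (hC : C ∈ selfDualSubspaces B) (hD : D ∈ selfDualSubspaces B) (hCD : C ⊓ D ⋖ C)
    (hxD : x ∈ D) (hxC : x ∉ C) :
    D = neighbourThrough B C x := by
  have hle : C ⊓ D ≤ C ⊓ LinearMap.ker (B x) :=
    le_inf inf_le_left fun y hy => apply_eq_zero_of_mem_selfDual hD hxD hy.2
  have hlt : C ⊓ LinearMap.ker (B x) < C := (inf_ker_covBy hB hC hxC).lt
  have hinf : C ⊓ LinearMap.ker (B x) = C ⊓ D :=
    (hCD.eq_or_eq hle hlt.le).resolve_right hlt.ne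
  have hNle : neighbourThrough B C x ≤ D :=
    sup_le (hinf ▸ inf_le_right) ((Submodule.span_singleton_le_iff_mem x D).2 hxD)
  have hN := neighbourThrough_mem_selfDualSubspaces hB hB₀ hC
    (apply_eq_zero_of_mem_selfDual hD hxD hxD) hxC
  exact (eq_of_le_of_selfDual hN hD hNle).symm

theorem exists_selfDual_inf_eq (hB : B.IsSymm) (hB₀ : B.Nondegenerate) (h2 : (2 : K) ≠ 0)
    (hC : C ∈ selfDualSubspaces B) (hE : E ⋖ C) :
    ∃ D ∈ selfDualSubspaces B, C ⊓ D = E := by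
  have hnle : ¬ B.orthogonal E ≤ C := fun h => by
    have := LinearMap.BilinForm.orthogonal_le (B := B) h
    rw [LinearMap.BilinForm.orthogonal_orthogonal hB₀ hB.isRefl, hC] at this
    exact this.not_gt hE.lt
  obtain ⟨y, hyE, hyC⟩ := SetLike.not_le_iff_exists.1 hnle
  obtain ⟨c, hc, hyc⟩ := exists_apply_ne_zero_of_notMem hB hC hyC
  set x := y - (B y y / (2 * B y c)) • c with hx
  have hxC : x ∉ C := fun h => hyC <| by
    simpa [hx] using C.add_mem h (C.smul_mem (B y y / (2 * B y c)) hc)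
  have hxx : B x x = 0 := by
    simp only [hx, map_sub, map_smul, LinearMap.sub_apply, LinearMap.smul_apply, smul_eq_mul,
      apply_eq_zero_of_mem_selfDual hC hc hc, hB.eq c y]
    field_simp
    ring
  have hEx : E ≤ C ⊓ LinearMap.ker (B x) := le_inf hE.le fun e he => by
    simp [hx, hB.eq y e, show B e y = 0 from hyE e he,
      apply_eq_zero_of_mem_selfDual hC hc (hE.le he)]
  refine ⟨_, neighbourThrough_mem_selfDualSubspaces hB hB₀ hC hxx hxC, ?_⟩
  rw [inf_neighbourThrough hxC]
  have hlt := (inf_ker_covBy hB hC hxC).lt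
  exact (hE.eq_or_eq hEx hlt.le).resolve_right hlt.ne

theorem orthogonal_inf_eq_sup (hB₀ : B.Nondegenerate)
    (hC : C ∈ selfDualSubspaces B) (hD : D ∈ selfDualSubspaces B) :
    B.orthogonal (C ⊓ D) = C ⊔ D := by
  have hle : C ⊔ D ≤ B.orthogonal (C ⊓ D) :=
    sup_le (hC.ge.trans (LinearMap.BilinForm.orthogonal_le inf_le_left))
      (hD.ge.trans (LinearMap.BilinForm.orthogonal_le inf_le_right))
  refine (Submodule.eq_of_le_of_finrank_eq hle ?_).symm
  have := Submodule.finrank_sup_add_finrank_inf_eq C D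
  have := two_mul_finrank_of_selfDual hB₀ hC
  have := two_mul_finrank_of_selfDual hB₀ hD
  rw [LinearMap.BilinForm.finrank_orthogonal hB₀]
  omega

theorem selfDual_eq_of_inf_eq (hB : B.IsSymm) (hB₀ : B.Nondegenerate) (h2 : (2 : K) ≠ 0)
    (hC : C ∈ selfDualSubspaces B) (hD : D ∈ selfDualSubspaces B) (hD' : D' ∈ selfDualSubspaces B)
    (hCD : C ⊓ D ⋖ C) (hinf : C ⊓ D' = C ⊓ D) : D' = D := by
  have hle : D' ≤ C ⊔ D := by
    rw [← orthogonal_inf_eq_sup hB₀ hC hD, ← hinf]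
    exact hD'.ge.trans (LinearMap.BilinForm.orthogonal_le inf_le_right)
  have hunion : (D' : Set V) ⊆ C ∪ D := fun x hx =>
    mem_or_mem_of_mem_sup hB h2 hC hD hCD (hle hx) (apply_eq_zero_of_mem_selfDual hD' hx hx)
  rcases AddSubgroupClass.subset_union.1 hunion with h | h
  · obtain rfl := eq_of_le_of_selfDual hD' hC h
    exact absurd (inf_idem D' ▸ hinf ▸ hCD) (irrefl _)
  · exact eq_of_le_of_selfDual hD' hD h

theorem card_neighbours_of_le [Finite K] (hB : B.IsSymm) (hB₀ : B.Nondegenerate)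
    (h2 : (2 : K) ≠ 0) (hC : C ∈ selfDualSubspaces B) (hUC : U ≤ C) :
    Nat.card {D : selfDualSubspaces B // C ⊓ D ⋖ C ∧ U ≤ D} =
      ∑ i ∈ range (finrank K C - finrank K U), Nat.card K ^ i := by
  rw [← card_submodule_covBy_of_le hUC]
  let f : {D : selfDualSubspaces B // C ⊓ D ⋖ C ∧ U ≤ D} → {E : Submodule K V // U ≤ E ∧ E ⋖ C} :=
    fun D => ⟨C ⊓ D.1, le_inf hUC D.2.2, D.2.1⟩
  refine Nat.card_congr (Equiv.ofBijective f ⟨fun D D' h => ?_, fun ⟨E, hUE, hEC⟩ => ?_⟩)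
  · exact Subtype.ext <| Subtype.ext <| selfDual_eq_of_inf_eq hB hB₀ h2 hC D'.1.2 D.1.2 D'.2.1
      (congrArg Subtype.val h)
  · obtain ⟨D, hD, rfl⟩ := exists_selfDual_inf_eq hB hB₀ h2 hC hEC
    exact ⟨⟨⟨D, hD⟩, hEC, hUE.trans inf_le_right⟩, rfl⟩

theorem inf_covBy_of_neighbour_of_not_le (hB₀ : B.Nondegenerate)
    (hC : C ∈ selfDualSubspaces B) (hD : D ∈ selfDualSubspaces B) (hCD : C ⊓ D ⋖ C)
    (hUD : U ≤ D) (hUC : ¬ U ≤ C) : C ⊓ U ⋖ U := by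
  have hDcov := inf_covBy_right_of_selfDual hB₀ hC hD hCD
  have hlt : C ⊓ D < C ⊓ D ⊔ U := left_lt_sup.2 fun h => hUC (h.trans inf_le_left)
  have hsup : C ⊓ D ⊔ U = D :=
    (hDcov.eq_or_eq hlt.le (sup_le inf_le_right hUD)).resolve_left hlt.ne'
  have hinf : C ⊓ D ⊓ U = C ⊓ U := by rw [inf_assoc, inf_eq_right.2 hUD]
  have hcov : C ⊓ D ⋖ C ⊓ D ⊔ U := by rwa [hsup]
  exact hinf ▸ hcov.inf_of_sup_left

-- Both sides count subsets of a singleton: the subspace `C ⊓ U`, and the neighbour of `C` through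
-- any point of `U` outside `C`.
theorem card_neighbours_of_not_le (hB : B.IsSymm) (hB₀ : B.Nondegenerate)
    (hC : C ∈ selfDualSubspaces B) (hU : U ≤ B.orthogonal U) (hUC : ¬ U ≤ C) :
    Nat.card {D : selfDualSubspaces B // C ⊓ D ⋖ C ∧ U ≤ D} =
      Nat.card {E : Submodule K V // E ⋖ U ∧ E ≤ C} := by
  obtain ⟨x, hxU, hxC⟩ := SetLike.not_le_iff_exists.1 hUC
  have hE {E} (hEU : E ⋖ U) (hEC : E ≤ C) : E = C ⊓ U :=
    ((hEU.eq_or_eq (le_inf hEC hEU.le) inf_le_right).resolve_right fun h =>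
      hUC (inf_eq_right.1 h)).symm
  have : Subsingleton {D : selfDualSubspaces B // C ⊓ D ⋖ C ∧ U ≤ D} :=
    ⟨fun D D' => Subtype.ext <| Subtype.ext <|
      (eq_neighbourThrough hB hB₀ hC D.1.2 D.2.1 (D.2.2 hxU) hxC).trans
        (eq_neighbourThrough hB hB₀ hC D'.1.2 D'.2.1 (D'.2.2 hxU) hxC).symm⟩
  have : Subsingleton {E : Submodule K V // E ⋖ U ∧ E ≤ C} :=
    ⟨fun E E' => Subtype.ext ((hE E.2.1 E.2.2).trans (hE E'.2.1 E'.2.2).symm)⟩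
  refine Nat.card_congr (equivOfSubsingletonOfSubsingleton (fun D => ?_) fun E => ?_)
  · exact ⟨C ⊓ U, inf_covBy_of_neighbour_of_not_le hB₀ hC D.1.2 D.2.1 D.2.2 hUC, inf_le_left⟩
  · exact ⟨⟨neighbourThrough B C x,
      neighbourThrough_mem_selfDualSubspaces hB hB₀ hC (hU hxU x hxU) hxC⟩,
      inf_neighbourThrough_covBy hB hC hxC,
      le_neighbourThrough hU hxU hxC (hE E.2.1 E.2.2 ▸ E.2.1)⟩

end Nondegenerate

end SelfDual

section KneserEigenvalue

/-- The eigenvalue `ν_m = (q^(n-m) - q^m) / (q - 1)` of the Kneser–Hecke operator. The exponent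
`n - m` is truncated, so this is meaningful for `m ≤ n`. -/
def kneserEigenvalue (q : ℂ) (n m : ℕ) : ℂ := (q ^ (n - m) - q ^ m) / (q - 1)

theorem kneserEigenvalue_add_geom_sum {q : ℂ} (hq : q ≠ 1) (n m : ℕ) :
    kneserEigenvalue q n m + ∑ i ∈ range m, q ^ i = ∑ i ∈ range (n - m), q ^ i := by
  rw [geom_sum_eq hq, geom_sum_eq hq, kneserEigenvalue]
  ring

theorem isSelfAdjoint_kneserEigenvalue (q n m : ℕ) : IsSelfAdjoint (kneserEigenvalue q n m) := by
  simp [isSelfAdjoint_iff, kneserEigenvalue]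

theorem kneserEigenvalue_injOn {q : ℕ} (hq : 1 < q) (n : ℕ) :
    Set.InjOn (kneserEigenvalue q n) (Set.Iic n) := by
  intro j hj k hk hjk
  wlog hlt : j < k generalizing j k
  · exact (not_lt.1 hlt).eq_or_lt.elim Eq.symm fun h => (this hk hj hjk.symm h).symm
  have hq' : (q : ℂ) - 1 ≠ 0 := sub_ne_zero.2 (by exact_mod_cast hq.ne')
  rw [kneserEigenvalue, kneserEigenvalue, div_left_inj' hq', sub_eq_sub_iff_add_eq_add] at hjk
  have hpow : q ^ (n - j) + q ^ k = q ^ (n - k) + q ^ j := by exact_mod_cast hjk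
  have hjk_pow : q ^ j < q ^ k := Nat.pow_lt_pow_right hq hlt
  have hsub_pow : q ^ (n - k) ≤ q ^ (n - j) := Nat.pow_le_pow_right (by omega) (by omega)
  omega

end KneserEigenvalue

section Incidence

variable {K V : Type*} [Field K] [AddCommGroup V] [Module K V] {𝓕 : Set (Submodule K V)}
  [Fintype 𝓕]

open Classical in
/-- The number of members of `𝓕` containing `U`, weighted by a function on `𝓕`. -/
def incidenceSum (U : Submodule K V) : (𝓕 → ℂ) →ₗ[ℂ] ℂ :=
  ∑ C : ↥𝓕 with U ≤ C.1, LinearMap.proj C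

open Classical in
/-- The adjacency operator of the graph on `𝓕` joining `C` and `D` when `C ⊓ D` has dimension
`n - k`. -/
def kneserAdjacency (n k : ℕ) : Module.End ℂ (𝓕 → ℂ) :=
  LinearMap.pi fun D => ∑ C : ↥𝓕 with finrank K ↥(C.1 ⊓ D.1) + k = n, LinearMap.proj C

variable (𝓕) in
/-- The functions on `𝓕` all of whose sums over the members containing a fixed subspace of
dimension less than `k` vanish; this corresponds to `V_{k-1}`. -/
def incidenceFiltration (k : ℕ) : Submodule ℂ (𝓕 → ℂ) :=
  ⨅ U : {U : Submodule K V // finrank K U < k}, LinearMap.ker (incidenceSum U.1)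

open Classical in
theorem incidenceSum_apply (U : Submodule K V) (g : 𝓕 → ℂ) :
    incidenceSum U g = ∑ C : ↥𝓕 with U ≤ C.1, g C := by
  simp [incidenceSum]

open Classical in
theorem kneserAdjacency_apply (n k : ℕ) (g : 𝓕 → ℂ) (D : 𝓕) :
    kneserAdjacency n k g D = ∑ C : ↥𝓕 with finrank K ↥(C.1 ⊓ D.1) + k = n, g C := by
  simp [kneserAdjacency]

theorem mem_incidenceFiltration {k : ℕ} {g : 𝓕 → ℂ} :
    g ∈ incidenceFiltration 𝓕 k ↔ ∀ U : Submodule K V, finrank K U < k → incidenceSum U g = 0 := by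
  simp [incidenceFiltration]

theorem incidenceFiltration_zero : incidenceFiltration 𝓕 0 = ⊤ :=
  eq_top_iff.2 fun _ _ => mem_incidenceFiltration.2 fun _ h => absurd h (Nat.not_lt_zero _)

theorem incidenceFiltration_antitone : Antitone (incidenceFiltration 𝓕) := fun _ _ hkl _ hg =>
  mem_incidenceFiltration.2 fun U hU => mem_incidenceFiltration.1 hg U (hU.trans_le hkl)

theorem incidenceFiltration_eq_bot [FiniteDimensional K V] {n : ℕ}
    (h𝓕 : ∀ C ∈ 𝓕, finrank K C = n) : incidenceFiltration 𝓕 (n + 1) = ⊥ := by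
  classical
  refine eq_bot_iff.2 fun g hg => funext fun C => ?_
  have hfilter : ({D : ↥𝓕 | C.1 ≤ D.1} : Finset ↥𝓕) = {C} := by
    ext D
    simp only [mem_filter_univ, mem_singleton]
    refine ⟨fun h => Subtype.ext (Submodule.eq_of_le_of_finrank_eq h ?_).symm, fun h => h ▸ le_rfl⟩
    rw [h𝓕 C C.2, h𝓕 D D.2]
  have hC := mem_incidenceFiltration.1 hg C ((h𝓕 C C.2).trans_lt n.lt_succ_self)
  rwa [incidenceSum_apply, hfilter, sum_singleton] at hC

theorem incidenceSum_kneserAdjacency (U : Submodule K V) (n k : ℕ) (g : 𝓕 → ℂ) :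
    incidenceSum U (kneserAdjacency n k g) =
      ∑ C : 𝓕, Nat.card {D : 𝓕 // finrank K ↥(C.1 ⊓ D) + k = n ∧ U ≤ D} * g C := by
  classical
  have hcard (C : 𝓕) : Nat.card {D : 𝓕 // finrank K ↥(C.1 ⊓ D) + k = n ∧ U ≤ D} =
      #{D : ↥𝓕 | finrank K ↥(C.1 ⊓ D) + k = n ∧ U ≤ D} := by
    rw [Nat.card_eq_fintype_card, Fintype.card_subtype]
  simp_rw [incidenceSum_apply, kneserAdjacency_apply, hcard, ← nsmul_eq_mul, ← sum_const]
  exact sum_comm' fun D C => by simp [and_comm]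

open Classical in
theorem sum_incidenceSum_covBy [Fintype (Submodule K V)] (U : Submodule K V) (g : 𝓕 → ℂ) :
    ∑ E : Submodule K V with E ⋖ U, incidenceSum E g =
      ∑ C : 𝓕, Nat.card {E : Submodule K V // E ⋖ U ∧ E ≤ C} * g C := by
  have hcard (C : 𝓕) : Nat.card {E : Submodule K V // E ⋖ U ∧ E ≤ C} =
      #{E : Submodule K V | E ⋖ U ∧ E ≤ C} := by
    rw [Nat.card_eq_fintype_card, Fintype.card_subtype]
  simp_rw [incidenceSum_apply, hcard, ← nsmul_eq_mul, ← sum_const]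
  exact sum_comm' fun E C => by simp

theorem incidenceSum_eq_zero_of_not_le_orthogonal {B : LinearMap.BilinForm K V}
    [Fintype (selfDualSubspaces B)] {U : Submodule K V} (hU : ¬ U ≤ B.orthogonal U)
    (g : selfDualSubspaces B → ℂ) :
    incidenceSum U g = 0 := by
  classical
  rw [incidenceSum_apply, filter_false_of_mem, sum_empty]
  exact fun C _ hUC => hU fun x hx y hy => apply_eq_zero_of_mem_selfDual C.2 (hUC hy) (hUC hx)

end Incidence

section DualPolarGraph

variable {K V : Type*} [Field K] [Finite K] [AddCommGroup V] [Module K V] [FiniteDimensional K V]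
  {B : LinearMap.BilinForm K V} {C U : Submodule K V} {n : ℕ}

open Classical in
theorem card_neighbours (hB : B.IsSymm) (hB₀ : B.Nondegenerate) (h2 : (2 : K) ≠ 0)
    (hC : C ∈ selfDualSubspaces B) (hU : U ≤ B.orthogonal U) :
    (Nat.card {D : selfDualSubspaces B // C ⊓ D ⋖ C ∧ U ≤ D} : ℂ) =
      (if U ≤ C then kneserEigenvalue (Nat.card K) (finrank K C) (finrank K U) else 0) +
        Nat.card {E : Submodule K V // E ⋖ U ∧ E ≤ C} := by
  split_ifs with hUC
  · have hE : Nat.card {E : Submodule K V // E ⋖ U ∧ E ≤ C} =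
        ∑ i ∈ range (finrank K U), Nat.card K ^ i := by
      rw [← card_submodule_covBy]
      exact Nat.card_congr (Equiv.subtypeEquivRight fun E =>
        and_iff_left_of_imp fun h => h.le.trans hUC)
    have hq : (Nat.card K : ℂ) ≠ 1 := by exact_mod_cast Finite.one_lt_card.ne'
    rw [hE, card_neighbours_of_le hB hB₀ h2 hC hUC]
    push_cast
    exact (kneserEigenvalue_add_geom_sum hq _ _).symm
  · rw [card_neighbours_of_not_le hB hB₀ hC hU hUC, zero_add]

variable [Fintype (selfDualSubspaces B)]

open Classical in
theorem incidenceSum_kneserAdjacency_one [Fintype (Submodule K V)] (hB : B.IsSymm)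
    (hB₀ : B.Nondegenerate) (h2 : (2 : K) ≠ 0) (hn : finrank K V = 2 * n)
    (hU : U ≤ B.orthogonal U) (g : selfDualSubspaces B → ℂ) :
    incidenceSum U (kneserAdjacency n 1 g) =
      kneserEigenvalue (Nat.card K) n (finrank K U) * incidenceSum U g +
        ∑ E : Submodule K V with E ⋖ U, incidenceSum E g := by
  have hcard (C : selfDualSubspaces B) :
      (Nat.card {D : selfDualSubspaces B // finrank K ↥(C.1 ⊓ D) + 1 = n ∧ U ≤ D} : ℂ) =
        (if U ≤ C then kneserEigenvalue (Nat.card K) n (finrank K U) else 0) +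
          Nat.card {E : Submodule K V // E ⋖ U ∧ E ≤ C} := by
    have hCn : finrank K C = n := by
      have := two_mul_finrank_of_selfDual hB₀ C.2
      omega
    rw [← hCn, ← card_neighbours hB hB₀ h2 C.2 hU]
    simp_rw [covBy_iff_finrank_add_one_eq (inf_le_left (a := C.1))]
  rw [incidenceSum_kneserAdjacency, sum_incidenceSum_covBy, incidenceSum_apply, mul_sum,
    sum_filter, ← sum_add_distrib]
  simp_rw [hcard, add_mul, ite_mul, zero_mul]

theorem kneserAdjacency_sub_smul_mem_incidenceFiltration (hB : B.IsSymm)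
    (hB₀ : B.Nondegenerate) (h2 : (2 : K) ≠ 0) (hn : finrank K V = 2 * n) {k : ℕ}
    {g : selfDualSubspaces B → ℂ} (hg : g ∈ incidenceFiltration (selfDualSubspaces B) k) :
    kneserAdjacency n 1 g - kneserEigenvalue (Nat.card K) n k • g ∈
      incidenceFiltration (selfDualSubspaces B) (k + 1) := by
  classical
  rw [mem_incidenceFiltration] at hg ⊢
  intro U hUk
  by_cases hU : U ≤ B.orthogonal U
  swap; · exact incidenceSum_eq_zero_of_not_le_orthogonal hU _
  have := Module.finite_of_finite K (M := V)
  have := Fintype.ofFinite (Submodule K V)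
  have hsum : ∑ E : Submodule K V with E ⋖ U, incidenceSum E g = 0 := by
    refine sum_eq_zero fun E hE => hg E ?_
    have := finrank_add_one_of_covBy (mem_filter.1 hE).2
    omega
  have hstep := incidenceSum_kneserAdjacency_one hB hB₀ h2 hn hU g
  rw [hsum, add_zero] at hstep
  rw [map_sub, map_smul, hstep]
  rcases (Nat.lt_succ_iff.1 hUk).lt_or_eq with hlt | rfl
  · simp [hg U hlt]
  · simp

end DualPolarGraph

section SymmetricFiltration

variable {K E : Type*} [Field K] [AddCommGroup E] [Module K E] {T : Module.End K E} {ν : ℕ → K}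
  {W : ℕ → Submodule K E} {n m : ℕ} {w : E}

theorem mem_filtration_of_mem_eigenspace (hW : W 0 = ⊤)
    (hTW : ∀ k ≤ n, ∀ v ∈ W k, T v - ν k • v ∈ W (k + 1)) (hν : Set.InjOn ν (Set.Iic n))
    (hm : m ≤ n) (hw : w ∈ Module.End.eigenspace T (ν m)) : w ∈ W m := by
  suffices h : ∀ k ≤ m, w ∈ W k from h m le_rfl
  intro k hk
  induction k with
  | zero => exact hW ▸ Submodule.mem_top
  | succ k ih =>
    have hmem := hTW k (by omega) w (ih (by omega))
    rw [Module.End.mem_eigenspace_iff.1 hw, ← sub_smul] at hmem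
    refine ((W (k + 1)).smul_mem_iff (sub_ne_zero.2 fun h => ?_)).1 hmem
    exact absurd (hν (Set.mem_Iic.2 hm) (Set.mem_Iic.2 (by omega)) h) (by omega)

variable [StarRing K] {B : E →ₗ⋆[K] E →ₗ[K] K}

theorem apply_sub_smul_comm (hT : ∀ x y, B (T x) y = B x (T y)) {a : K} (ha : IsSelfAdjoint a)
    (x y : E) : B (T x - a • x) y = B x (T y - a • y) := by
  simp [hT, starRingEnd_apply, ha.star_eq]

theorem apply_eq_zero_of_mem_eigenspace (hT : ∀ x y, B (T x) y = B x (T y))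
    (hW : W (n + 1) = ⊥) (hTW : ∀ k ≤ n, ∀ v ∈ W k, T v - ν k • v ∈ W (k + 1))
    (hν : Set.InjOn ν (Set.Iic n)) (hν' : ∀ k, IsSelfAdjoint (ν k)) (hm : m ≤ n)
    (hw : w ∈ Module.End.eigenspace T (ν m)) {v : E} (hv : v ∈ W (m + 1)) : B w v = 0 := by
  suffices h : ∀ k ≤ n + 1, m < k → ∀ v ∈ W k, B w v = 0 from h _ (by omega) m.lt_succ_self v hv
  intro k hk
  induction hk using Nat.decreasingInduction with
  | self =>
    intro _ v hv
    rw [hW, Submodule.mem_bot] at hv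
    rw [hv, map_zero]
  | of_succ k hk ih =>
    intro hmk v hv
    have hstep := ih (by omega) _ (hTW k (by omega) v hv)
    rw [← apply_sub_smul_comm hT (hν' k), Module.End.mem_eigenspace_iff.1 hw, ← sub_smul,
      LinearMap.map_smulₛₗ₂, smul_eq_mul, map_sub, starRingEnd_apply, starRingEnd_apply,
      hν' m, hν' k] at hstep
    refine (mul_eq_zero.1 hstep).resolve_left (sub_ne_zero.2 fun h => hmk.ne ?_)
    exact hν (Set.mem_Iic.2 hm) (Set.mem_Iic.2 (by omega)) h

theorem mem_eigenspace_of_mem_filtration (hB : ∀ x, B x x = 0 → x = 0)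
    (hT : ∀ x y, B (T x) y = B x (T y)) (hW : Antitone W)
    (hTW : ∀ v ∈ W m, T v - ν m • v ∈ W (m + 1)) (hν : IsSelfAdjoint (ν m)) (hw : w ∈ W m)
    (horth : ∀ v ∈ W (m + 1), B w v = 0) : w ∈ Module.End.eigenspace T (ν m) := by
  have hz := hTW _ (hW m.le_succ (hTW w hw))
  refine Module.End.mem_eigenspace_iff.2 (sub_eq_zero.1 (hB _ ?_))
  rw [apply_sub_smul_comm hT hν]
  exact horth _ hz

theorem mem_eigenspace_iff_mem_filtration (hB : ∀ x, B x x = 0 → x = 0)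
    (hT : ∀ x y, B (T x) y = B x (T y)) (hW : Antitone W) (hW₀ : W 0 = ⊤) (hW₁ : W (n + 1) = ⊥)
    (hTW : ∀ k ≤ n, ∀ v ∈ W k, T v - ν k • v ∈ W (k + 1))
    (hν : Set.InjOn ν (Set.Iic n)) (hν' : ∀ k, IsSelfAdjoint (ν k)) (hm : m ≤ n) :
    w ∈ Module.End.eigenspace T (ν m) ↔ (∀ v ∈ W (m + 1), B w v = 0) ∧ w ∈ W m :=
  ⟨fun hw => ⟨fun _ => apply_eq_zero_of_mem_eigenspace hT hW₁ hTW hν hν' hm hw,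
    mem_filtration_of_mem_eigenspace hW₀ hTW hν hm hw⟩,
   fun ⟨horth, hw⟩ => mem_eigenspace_of_mem_filtration hB hT hW (hTW m hm) (hν' m) hw horth⟩

end SymmetricFiltration

theorem card_subtype_eq_mul_of_fibers {α β : Type*} [Finite α] [Finite β] (φ : α → β)
    {s : Set β} {k : ℕ} (hφ : ∀ a, φ a ∈ s) (hk : ∀ b ∈ s, Nat.card {a // φ a = b} = k)
    (p : β → Prop) : Nat.card {a // p (φ a)} = Nat.card {b // p b ∧ b ∈ s} * k := by
  classical
  have := Fintype.ofFinite α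
  have := Fintype.ofFinite β
  simp_rw [Nat.card_eq_fintype_card, Fintype.card_subtype] at hk ⊢
  rw [card_eq_sum_card_fiberwise (f := φ) (t := {b | p b ∧ b ∈ s})]
  · refine sum_const_nat fun b hb => ?_
    rw [mem_filter_univ] at hb
    rw [← hk b hb.2, filter_filter]
    congr 1
    ext a
    simp only [mem_filter_univ, and_iff_right_iff_imp]
    rintro rfl
    exact hb.1
  · intro a ha
    simpa [hφ] using ha

section Equivalence

variable {F : Type} [Field F] {N : ℕ} {𝓕 : Set (Submodule F (Fin N → F))}

variable (𝓕) in
/-- Closure of a family of codes under coordinate permutations, so that equivalence classes within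
the family are full orbits of `S_N`. -/
def PermInvariant : Prop :=
  ∀ π : Equiv.Perm (Fin N), ∀ C ∈ 𝓕, permCode π C ∈ 𝓕

theorem mem_permCode {π : Equiv.Perm (Fin N)} {C : Submodule F (Fin N → F)} {x : Fin N → F} :
    x ∈ permCode π C ↔ x ∘ ⇑π⁻¹ ∈ C := by
  constructor
  · rintro ⟨y, hy, rfl⟩
    rwa [LinearMap.funLeft, LinearMap.coe_mk, AddHom.coe_mk, Function.comp_assoc,
      ← Equiv.Perm.coe_mul, mul_inv_cancel, Equiv.Perm.coe_one, Function.comp_id]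
  · exact fun h => ⟨_, h, by ext; simp [LinearMap.funLeft]⟩

theorem permCode_permCode (π σ : Equiv.Perm (Fin N)) (C : Submodule F (Fin N → F)) :
    permCode π (permCode σ C) = permCode (σ * π) C := by
  ext x
  simp [mem_permCode, Function.comp_assoc]

theorem permCode_one (C : Submodule F (Fin N → F)) : permCode 1 C = C := by
  ext x
  simp [mem_permCode]

theorem permCode_injective (π : Equiv.Perm (Fin N)) :
    Function.Injective (permCode (F := F) π) :=
  Function.LeftInverse.injective (g := permCode π⁻¹) fun C => by
    rw [permCode_permCode, mul_inv_cancel, permCode_one]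

theorem permCode_inf (π : Equiv.Perm (Fin N)) (C D : Submodule F (Fin N → F)) :
    permCode π (C ⊓ D) = permCode π C ⊓ permCode π D := by
  ext x
  simp [mem_permCode]

theorem finrank_permCode (π : Equiv.Perm (Fin N)) (C : Submodule F (Fin N → F)) :
    finrank F (permCode π C) = finrank F C :=
  (LinearEquiv.funCongrLeft F F π).finrank_map_eq C

theorem finrank_permCode_inf_comm (π : Equiv.Perm (Fin N)) (C D : Submodule F (Fin N → F)) :
    finrank F ↥(permCode π C ⊓ D) = finrank F ↥(permCode π⁻¹ D ⊓ C) := by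
  rw [← finrank_permCode π⁻¹, permCode_inf, permCode_permCode, mul_inv_cancel, permCode_one,
    inf_comm]

theorem clsOf_eq_clsOf_iff {C D : 𝓕} : clsOf C = clsOf D ↔ ∃ π, permCode π C.1 = D.1 := by
  have heq : Equivalence fun C D : 𝓕 => equivCode C.1 D.1 := by
    refine ⟨fun C => ⟨1, permCode_one _⟩, fun {C _} ⟨π, h⟩ => ⟨π⁻¹, ?_⟩,
      fun ⟨π, h⟩ ⟨σ, h'⟩ => ⟨π * σ, ?_⟩⟩
    · rw [← h, permCode_permCode, mul_inv_cancel, permCode_one]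
    · rw [← permCode_permCode, h, h']
  rw [clsOf, clsOf, Quot.eq, heq.eqvGen_iff, equivCode]

theorem clsOf_repB (b : ClassesB 𝓕) : clsOf (repB b) = b :=
  Quot.out_eq b

theorem autCard_pos (C : Submodule F (Fin N → F)) : 0 < autCard C :=
  have : Nonempty {π : Equiv.Perm (Fin N) // permCode π C = C} := ⟨⟨1, permCode_one C⟩⟩
  Nat.card_pos

theorem card_permCode_eq_permCode (C : Submodule F (Fin N → F)) (σ : Equiv.Perm (Fin N)) :
    Nat.card {π : Equiv.Perm (Fin N) // permCode π C = permCode σ C} = autCard C :=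
  (Nat.card_congr ((Equiv.mulRight σ).subtypeEquiv fun π => by
    rw [Equiv.coe_mulRight, ← permCode_permCode, (permCode_injective σ).eq_iff])).symm

theorem autCard_permCode (C : Submodule F (Fin N → F)) (σ : Equiv.Perm (Fin N)) :
    autCard (permCode σ C) = autCard C := by
  rw [← card_permCode_eq_permCode C σ]
  exact Nat.card_congr ((Equiv.mulLeft σ).subtypeEquiv fun π => by
    rw [Equiv.coe_mulLeft, permCode_permCode])

theorem autCard_eq_of_clsOf_eq {C D : 𝓕} (h : clsOf C = clsOf D) : autCard C.1 = autCard D.1 := by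
  obtain ⟨π, hπ⟩ := clsOf_eq_clsOf_iff.1 h
  rw [← hπ, autCard_permCode]

theorem card_perm_eq_card_class_mul_autCard [Finite F] (h𝓕 : PermInvariant 𝓕) (C : 𝓕)
    (p : Submodule F (Fin N → F) → Prop) :
    Nat.card {π : Equiv.Perm (Fin N) // p (permCode π C)} =
      Nat.card {D : 𝓕 // p D ∧ clsOf D = clsOf C} * autCard C.1 := by
  refine card_subtype_eq_mul_of_fibers (fun π => (⟨permCode π C, h𝓕 π C C.2⟩ : 𝓕))
    (s := {D | clsOf D = clsOf C}) (fun π => (clsOf_eq_clsOf_iff.2 ⟨π, rfl⟩).symm) ?_ (fun D => p D)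
  intro D hD
  obtain ⟨σ, hσ⟩ := clsOf_eq_clsOf_iff.1 (Set.mem_ofPred_eq ▸ hD).symm
  simp_rw [Subtype.ext_iff, ← hσ]
  exact card_permCode_eq_permCode C.1 σ

theorem card_perm_finrank_inf_comm (n k : ℕ) (C D : Submodule F (Fin N → F)) :
    Nat.card {π : Equiv.Perm (Fin N) // finrank F ↥(permCode π C ⊓ D) + k = n} =
      Nat.card {π : Equiv.Perm (Fin N) // finrank F ↥(C ⊓ permCode π D) + k = n} :=
  Nat.card_congr ((Equiv.inv _).subtypeEquiv fun π => by
    rw [finrank_permCode_inf_comm, inf_comm, Equiv.inv_apply])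

theorem card_neighbours_mul_autCard_comm [Finite F] (h𝓕 : PermInvariant 𝓕) (n k : ℕ) (C D : 𝓕) :
    Nat.card {D' : 𝓕 // finrank F ↥(C.1 ⊓ D') + k = n ∧ clsOf D' = clsOf D} * autCard D.1 =
      Nat.card {C' : 𝓕 // finrank F ↥(D.1 ⊓ C') + k = n ∧ clsOf C' = clsOf C} * autCard C.1 := by
  rw [← card_perm_eq_card_class_mul_autCard h𝓕 D fun D' => finrank F ↥(C.1 ⊓ D') + k = n,
    ← card_perm_eq_card_class_mul_autCard h𝓕 C fun C' => finrank F ↥(D.1 ⊓ C') + k = n,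
    ← card_perm_finrank_inf_comm]
  exact Nat.card_congr (Equiv.subtypeEquivRight fun π => by rw [inf_comm])

end Equivalence

section Monomials

theorem exists_perm_eq_comp_iff {α β : Type*} [Finite α] (f g : α → β) :
    (∃ π : Equiv.Perm α, g = f ∘ π) ↔
      ∀ b, Nat.card {a // f a = b} = Nat.card {a // g a = b} := by
  constructor
  · rintro ⟨π, rfl⟩ b
    exact (Nat.card_congr (π.subtypeEquiv fun a => Iff.rfl)).symm
  · intro h
    let e (b : β) := (Finite.card_eq.1 (h b)).some.symm
    exact ⟨Equiv.ofFiberEquiv e, funext fun a => (Equiv.ofFiberEquiv_map e a).symm⟩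

theorem exists_span_range_eq_of_finrank_le {K V : Type*} [DivisionRing K] [AddCommGroup V]
    [Module K V] [FiniteDimensional K V] {U : Submodule K V} {m : ℕ} (hU : finrank K U ≤ m) :
    ∃ c : Fin m → V, Submodule.span K (Set.range c) = U := by
  obtain ⟨f, -, hf, -⟩ := Submodule.exists_fun_fin_finrank_span_eq K (U : Set V)
  have hr : finrank K (Submodule.span K (U : Set V)) ≤ m := by rwa [Submodule.span_eq]
  refine ⟨Function.extend (Fin.castLE hr) f 0, ?_⟩
  rw [Set.range_extend (Fin.castLE_injective hr), Submodule.span_union,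
    hf.trans U.span_eq, sup_eq_left, Submodule.span_le]
  rintro _ ⟨_, _, rfl⟩
  exact U.zero_mem

variable {F : Type} {m N : ℕ}

theorem mon_eq_mon_iff {c c' : Fin m → Fin N → F} :
    mon c' = mon c ↔ ∃ π : Equiv.Perm (Fin N), c' = fun j => c j ∘ π := by
  have hmon (c : Fin m → Fin N → F) (v : Fin m → F) :
      mon c v = Nat.card {i // Function.swap c i = v} := by
    simp only [mon, funext_iff, Function.swap]
  rw [eq_comm, funext_iff]
  simp_rw [hmon, ← exists_perm_eq_comp_iff, funext_iff, Function.swap, Function.comp_apply]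
  exact exists_congr fun π => forall_comm

theorem mon_mem_MmSet [Fintype F] (c : Fin m → Fin N → F) : mon c ∈ MmSet F m N := by
  classical
  have hmon (v : Fin m → F) : mon c v = #{i | Function.swap c i = v} := by
    rw [mon, Nat.card_eq_fintype_card, Fintype.card_subtype]
    simp only [funext_iff, Function.swap]
  rw [MmSet, Set.mem_ofPred_eq]
  simp_rw [hmon]
  rw [← card_eq_sum_card_fiberwise fun _ _ => mem_coe.2 (mem_univ _), card_univ, Fintype.card_fin]

theorem card_perm_tuple_mem [Field F] [Finite F] (c : Fin m → Fin N → F)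
    (C : Submodule F (Fin N → F)) :
    Nat.card {π : Equiv.Perm (Fin N) // ∀ j, c j ∈ permCode π C} =
      aX (mon c) C * Nat.card {π : Equiv.Perm (Fin N) // (fun j => c j ∘ π) = c} := by
  have hinv : Nat.card {π : Equiv.Perm (Fin N) // ∀ j, c j ∈ permCode π C} =
      Nat.card {π : Equiv.Perm (Fin N) // ∀ j, c j ∘ π ∈ C} :=
    Nat.card_congr ((Equiv.inv _).subtypeEquiv fun π => by simp [mem_permCode])
  rw [hinv]
  refine card_subtype_eq_mul_of_fibers (fun (π : Equiv.Perm (Fin N)) j => c j ∘ π)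
    (s := {c' | mon c' = mon c}) (fun π => mon_eq_mon_iff.2 ⟨π, rfl⟩) ?_ (fun c' => ∀ j, c' j ∈ C)
  intro c' hc'
  obtain ⟨σ, rfl⟩ := mon_eq_mon_iff.1 (Set.mem_ofPred_eq ▸ hc')
  refine (Nat.card_congr ((Equiv.mulRight σ).subtypeEquiv fun π => ?_)).symm
  simp only [funext_iff, Equiv.coe_mulRight, Equiv.Perm.coe_mul, Function.comp_apply]
  exact forall_congr' fun j => σ.forall_congr_right.symm

end Monomials

section HeckeOperator

variable {F : Type} [Field F] [Fintype F] {N : ℕ} (𝓕 : Set (Submodule F (Fin N → F)))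

-- `innerV`, `heckeT` and `aXc` sum over this instance.
instance fintypeClassesB : Fintype (ClassesB 𝓕) := Fintype.ofFinite _

/-- `heckeT 𝓕 n k` as a linear endomorphism of `V`. -/
def heckeEnd (n k : ℕ) : Module.End ℂ (ClassesB 𝓕 → ℂ) where
  toFun := heckeT 𝓕 n k
  map_add' v w := by ext; simp [heckeT, add_mul, sum_add_distrib]
  map_smul' a v := by ext; simp [heckeT, mul_assoc, mul_sum]

/-- `innerV 𝓕` as a sesquilinear form on `V`. -/
def classForm : (ClassesB 𝓕 → ℂ) →ₗ⋆[ℂ] (ClassesB 𝓕 → ℂ) →ₗ[ℂ] ℂ :=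
  LinearMap.mk₂'ₛₗ (starRingEnd ℂ) (RingHom.id ℂ) (innerV 𝓕)
    (fun _ _ _ => by simp [innerV, add_mul, sum_add_distrib])
    (fun _ _ _ => by simp [innerV, mul_sum, mul_assoc])
    (fun _ _ _ => by simp [innerV, mul_add, add_mul, sum_add_distrib])
    (fun _ _ _ => by simp [innerV, mul_sum, mul_assoc, mul_left_comm])

variable {𝓕}

theorem eq_zero_of_classForm_self_eq_zero {v : ClassesB 𝓕 → ℂ} (hv : classForm 𝓕 v v = 0) :
    v = 0 := by
  change innerV 𝓕 v v = 0 at hv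
  have hterm (b : ClassesB 𝓕) : starRingEnd ℂ (v b) * v b * autCard (repB b).1 =
      ((Complex.normSq (v b) * autCard (repB b).1 : ℝ) : ℂ) := by
    rw [Complex.ofReal_mul, Complex.normSq_eq_conj_mul_self, Complex.ofReal_natCast]
  simp_rw [innerV, hterm, ← Complex.ofReal_sum, Complex.ofReal_eq_zero] at hv
  have hb (b : ClassesB 𝓕) : Complex.normSq (v b) * autCard (repB b).1 = 0 :=
    (sum_eq_zero_iff_of_nonneg fun _ _ => mul_nonneg (Complex.normSq_nonneg _)
      (Nat.cast_nonneg _)).1 hv b (mem_univ b)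
  exact funext fun b => Complex.normSq_eq_zero.1
    ((mul_eq_zero.1 (hb b)).resolve_right (Nat.cast_ne_zero.2 (autCard_pos _).ne'))

theorem classForm_heckeEnd_comm (h𝓕 : PermInvariant 𝓕) (n k : ℕ) (v w : ClassesB 𝓕 → ℂ) :
    classForm 𝓕 (heckeEnd 𝓕 n k v) w = classForm 𝓕 v (heckeEnd 𝓕 n k w) := by
  change innerV 𝓕 (heckeT 𝓕 n k v) w = innerV 𝓕 v (heckeT 𝓕 n k w)
  simp_rw [innerV, heckeT, map_sum, mul_sum, sum_mul, map_mul, Complex.conj_natCast]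
  rw [sum_comm]
  refine sum_congr rfl fun b _ => sum_congr rfl fun b' _ => ?_
  have hcomm := card_neighbours_mul_autCard_comm h𝓕 n k (repB b) (repB b')
  rw [clsOf_repB, clsOf_repB] at hcomm
  have hcomm' := congrArg (Nat.cast : ℕ → ℂ) hcomm
  push_cast at hcomm'
  linear_combination starRingEnd ℂ (v b) * w b' * hcomm'

end HeckeOperator

section Lift

variable {F : Type} [Field F] {N : ℕ} {𝓕 : Set (Submodule F (Fin N → F))}

variable (𝓕) in
/-- The permutation-invariant function `D ↦ |Aut D| · v([D])` on the family `𝓕` attached to a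
vector `v`; it carries the Kneser–Hecke operator to the adjacency operator on `𝓕`. -/
def invariantLift : (ClassesB 𝓕 → ℂ) →ₗ[ℂ] 𝓕 → ℂ :=
  LinearMap.pi fun D => (autCard D.1 : ℂ) • LinearMap.proj (clsOf D)

theorem invariantLift_apply (v : ClassesB 𝓕 → ℂ) (D : 𝓕) :
    invariantLift 𝓕 v D = autCard D.1 * v (clsOf D) :=
  rfl

theorem ker_invariantLift : LinearMap.ker (invariantLift 𝓕) = ⊥ := by
  refine LinearMap.ker_eq_bot'.2 fun v hv => funext fun b => ?_
  have hb : (autCard (repB b).1 : ℂ) * v b = 0 := by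
    simpa only [invariantLift_apply, clsOf_repB, Pi.zero_apply] using congrFun hv (repB b)
  exact (mul_eq_zero.1 hb).resolve_left (Nat.cast_ne_zero.2 (autCard_pos _).ne')

variable [Fintype 𝓕]

variable (𝓕) in
/-- The subspace `V_{k-1}`, described through the incidence sums of the lifted vectors. -/
def codeFiltration (k : ℕ) : Submodule ℂ (ClassesB 𝓕 → ℂ) :=
  (incidenceFiltration 𝓕 k).comap (invariantLift 𝓕)

theorem codeFiltration_zero : codeFiltration 𝓕 0 = ⊤ := by
  rw [codeFiltration, incidenceFiltration_zero, Submodule.comap_top]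

theorem codeFiltration_antitone : Antitone (codeFiltration 𝓕) := fun _ _ hkl =>
  Submodule.comap_mono (incidenceFiltration_antitone hkl)

theorem codeFiltration_eq_bot {n : ℕ} (h𝓕 : ∀ C ∈ 𝓕, finrank F C = n) :
    codeFiltration 𝓕 (n + 1) = ⊥ := by
  rw [codeFiltration, incidenceFiltration_eq_bot h𝓕, Submodule.comap_bot, ker_invariantLift]

variable [Fintype F]

theorem sum_filter_invariantLift (h𝓕 : PermInvariant 𝓕)
    (p : Submodule F (Fin N → F) → Prop) [DecidablePred p] (v : ClassesB 𝓕 → ℂ) :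
    ∑ D : ↥𝓕 with p D.1, invariantLift 𝓕 v D =
      ∑ b, v b * Nat.card {π : Equiv.Perm (Fin N) // p (permCode π (repB b).1)} := by
  classical
  rw [← sum_fiberwise _ clsOf]
  refine sum_congr rfl fun b _ => ?_
  have hterm : ∀ D ∈ ({D : ↥𝓕 | p D.1} : Finset ↥𝓕).filter (clsOf · = b),
      invariantLift 𝓕 v D = autCard (repB b).1 * v b := fun D hD => by
    have hDb : clsOf D = b := (mem_filter.1 hD).2
    rw [invariantLift_apply, hDb, autCard_eq_of_clsOf_eq (hDb.trans (clsOf_repB b).symm)]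
  rw [sum_congr rfl hterm, sum_const, nsmul_eq_mul, card_perm_eq_card_class_mul_autCard h𝓕,
    clsOf_repB, Nat.card_eq_fintype_card, Fintype.card_subtype, filter_filter]
  push_cast
  ring

theorem invariantLift_heckeEnd (h𝓕 : PermInvariant 𝓕) (n k : ℕ) (v : ClassesB 𝓕 → ℂ) :
    invariantLift 𝓕 (heckeEnd 𝓕 n k v) = kneserAdjacency n k (invariantLift 𝓕 v) := by
  classical
  change invariantLift 𝓕 (heckeT 𝓕 n k v) = _
  ext D
  rw [kneserAdjacency_apply, sum_filter_invariantLift h𝓕 fun C => finrank F ↥(C ⊓ D.1) + k = n,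
    invariantLift_apply, heckeT, mul_sum]
  refine sum_congr rfl fun b _ => ?_
  rw [card_perm_finrank_inf_comm, card_perm_eq_card_class_mul_autCard h𝓕 D
    fun C => finrank F ↥((repB b).1 ⊓ C) + k = n]
  push_cast
  ring

theorem incidenceSum_invariantLift (h𝓕 : PermInvariant 𝓕) {m : ℕ} (c : Fin m → Fin N → F)
    (v : ClassesB 𝓕 → ℂ) :
    incidenceSum (Submodule.span F (Set.range c)) (invariantLift 𝓕 v) =
      aXc 𝓕 (mon c) v * Nat.card {π : Equiv.Perm (Fin N) // (fun j => c j ∘ π) = c} := by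
  classical
  rw [incidenceSum_apply, sum_filter_invariantLift h𝓕 (Submodule.span F (Set.range c) ≤ ·), aXc,
    sum_mul]
  refine sum_congr rfl fun b _ => ?_
  simp_rw [Submodule.span_le, Set.range_subset_iff, SetLike.mem_coe, card_perm_tuple_mem]
  push_cast
  ring

theorem mem_VmSet_iff (h𝓕 : PermInvariant 𝓕)
    {m : ℕ} {v : ClassesB 𝓕 → ℂ} :
    v ∈ VmSet 𝓕 m ↔ invariantLift 𝓕 v ∈ incidenceFiltration 𝓕 (m + 1) := by
  rw [mem_incidenceFiltration]
  constructor
  · intro hv U hU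
    obtain ⟨c, rfl⟩ := exists_span_range_eq_of_finrank_le (Nat.lt_succ_iff.1 hU)
    rw [incidenceSum_invariantLift h𝓕, hv _ (mon_mem_MmSet c), zero_mul]
  · intro hv X _
    by_cases hX : ∃ c : Fin m → Fin N → F, mon c = X
    · obtain ⟨c, rfl⟩ := hX
      have hc := hv (Submodule.span F (Set.range c))
        (Nat.lt_succ_iff.2 ((finrank_range_le_card c).trans_eq (Fintype.card_fin m)))
      rw [incidenceSum_invariantLift h𝓕] at hc
      have : Nonempty {π : Equiv.Perm (Fin N) // (fun j => c j ∘ π) = c} := ⟨⟨1, rfl⟩⟩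
      exact (mul_eq_zero.1 hc).resolve_right (Nat.cast_ne_zero.2 Nat.card_pos.ne')
    · have haX (C : Submodule F (Fin N → F)) : aX X C = 0 :=
        have : IsEmpty {c : Fin m → Fin N → F // (∀ j, c j ∈ C) ∧ mon c = X} :=
          ⟨fun c => hX ⟨c, c.2.2⟩⟩
        Nat.card_of_isEmpty
      simp [aXc, haX]

theorem mem_codeFiltration (h𝓕 : PermInvariant 𝓕) {k : ℕ} {v : ClassesB 𝓕 → ℂ} :
    v ∈ codeFiltration 𝓕 k ↔ v ∈ VmPred 𝓕 k := by
  rw [codeFiltration, Submodule.mem_comap]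
  cases k with
  | zero => simp [incidenceFiltration_zero, VmPred]
  | succ m => exact (mem_VmSet_iff h𝓕).symm

end Lift

section SelfDualFamily

variable {F : Type} [Field F] [Fintype F] {n : ℕ}
  {B : LinearMap.BilinForm F (Fin (2 * n) → F)}

theorem heckeEnd_sub_smul_mem_codeFiltration [Fintype (selfDualSubspaces B)] (hB : B.IsSymm)
    (hB₀ : B.Nondegenerate) (h2 : (2 : F) ≠ 0) (hperm : PermInvariant (selfDualSubspaces B))
    {k : ℕ} {v : ClassesB (selfDualSubspaces B) → ℂ}
    (hv : v ∈ codeFiltration (selfDualSubspaces B) k) :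
    heckeEnd (selfDualSubspaces B) n 1 v - kneserEigenvalue (Fintype.card F) n k • v ∈
      codeFiltration (selfDualSubspaces B) (k + 1) := by
  rw [codeFiltration, Submodule.mem_comap, map_sub, map_smul, invariantLift_heckeEnd hperm,
    ← Nat.card_eq_fintype_card]
  exact kneserAdjacency_sub_smul_mem_incidenceFiltration hB hB₀ h2
    (finrank_fin_fun F) hv

end SelfDualFamily

section EuclideanForm

theorem two_ne_zero_of_odd_card {F : Type*} [Field F] [Fintype F] (hq : Odd (Fintype.card F)) :
    (2 : F) ≠ 0 :=
  Ring.two_ne_zero fun h =>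
    Nat.not_even_iff_odd.2 hq (Nat.even_iff.2 (FiniteField.even_card_of_char_two h))

variable {F : Type} [Field F] {N : ℕ}

variable (F N) in
/-- The form `b(x, y) = ∑ i, x i * y i` as a bilinear form. -/
def euclideanForm : LinearMap.BilinForm F (Fin N → F) :=
  dotProductBilin F F

theorem isSymm_euclideanForm : (euclideanForm F N).IsSymm :=
  ⟨fun x y => dotProduct_comm x y⟩

theorem nondegenerate_euclideanForm : (euclideanForm F N).Nondegenerate :=
  (LinearMap.IsRefl.nondegenerate_iff_separatingLeft (B := euclideanForm F N)
    isSymm_euclideanForm.isRefl).2 fun _ h => dotProduct_eq_zero_iff.1 h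

theorem orthogonal_euclideanForm (C : Submodule F (Fin N → F)) :
    (euclideanForm F N).orthogonal C = dualCode id C := by
  ext x
  exact forall₂_congr fun c _ => isSymm_euclideanForm.isRefl.eq_iff

theorem selfDualSubspaces_euclideanForm :
    selfDualSubspaces (euclideanForm F N) = {C | C = dualCode id C} := by
  ext C
  rw [selfDualSubspaces, Set.mem_ofPred_eq, orthogonal_euclideanForm, eq_comm]
  rfl

theorem orthogonal_permCode (π : Equiv.Perm (Fin N)) (C : Submodule F (Fin N → F)) :
    (euclideanForm F N).orthogonal (permCode π C) =
      permCode π ((euclideanForm F N).orthogonal C) := by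
  ext x
  rw [mem_permCode]
  simp only [LinearMap.BilinForm.mem_orthogonal_iff, permCode, Submodule.mem_map,
    forall_exists_index, and_imp, forall_apply_eq_imp_iff₂]
  exact forall₂_congr fun c _ => by
    change c ∘ π ⬝ᵥ x = 0 ↔ c ⬝ᵥ x ∘ π.symm = 0
    rw [dotProduct_comp_equiv_symm]

theorem permInvariant_selfDualSubspaces :
    PermInvariant (selfDualSubspaces (euclideanForm F N)) := fun π C hC =>
  (orthogonal_permCode π C).trans (congrArg (permCode π) hC)

end EuclideanForm

end KneserHeckeCodes

theorem kneserHecke_eigenspace_qE_general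
    {F : Type} [Field F] [Fintype F] (h2 : (2 : F) ≠ 0) {n : ℕ}
    {B : LinearMap.BilinForm F (Fin (2 * n) → F)} (hB : B.IsSymm) (hB₀ : B.Nondegenerate)
    (hperm : PermInvariant (selfDualSubspaces B)) {m : ℕ} (hm : m ≤ n) :
    YmSet (selfDualSubspaces B) m =
      {v | heckeT (selfDualSubspaces B) n 1 v = kneserEigenvalue (Fintype.card F) n m • v} := by
  have := Fintype.ofFinite (selfDualSubspaces B)
  have hrank : ∀ C ∈ selfDualSubspaces B, Module.finrank F C = n := fun C hC => by
    have hdim := two_mul_finrank_of_selfDual hB₀ hC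
    rw [Module.finrank_fin_fun] at hdim
    omega
  have hstep : ∀ k ≤ n, ∀ v ∈ codeFiltration (selfDualSubspaces B) k,
      heckeEnd (selfDualSubspaces B) n 1 v - kneserEigenvalue (Fintype.card F) n k • v ∈
        codeFiltration (selfDualSubspaces B) (k + 1) := fun _ _ _ =>
    heckeEnd_sub_smul_mem_codeFiltration hB hB₀ h2 hperm
  ext w
  calc w ∈ YmSet (selfDualSubspaces B) m
      ↔ (∀ v ∈ codeFiltration (selfDualSubspaces B) (m + 1),
          classForm (selfDualSubspaces B) w v = 0) ∧
          w ∈ codeFiltration (selfDualSubspaces B) m := by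
        simp_rw [mem_codeFiltration hperm]
        rfl
    _ ↔ w ∈ Module.End.eigenspace (heckeEnd (selfDualSubspaces B) n 1)
          (kneserEigenvalue (Fintype.card F) n m) :=
        (mem_eigenspace_iff_mem_filtration (fun _ => eq_zero_of_classForm_self_eq_zero)
          (classForm_heckeEnd_comm hperm n 1) codeFiltration_antitone codeFiltration_zero
          (codeFiltration_eq_bot hrank) hstep (kneserEigenvalue_injOn Fintype.one_lt_card n)
          (isSelfAdjoint_kneserEigenvalue _ n) hm).symm
    _ ↔ w ∈ {v | heckeT (selfDualSubspaces B) n 1 v =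
          kneserEigenvalue (Fintype.card F) n m • v} := Module.End.mem_eigenspace_iff

/-- For `q` odd and `𝓕` the family of all (Euclidean) self-dual codes in
`F_q^{2n}`, the space `Y_m` is exactly the eigenspace of the Kneser-Hecke operator `T`
with eigenvalue `ν_m = (q^{n-m} - q^m)/(q - 1)`. -/
theorem kneserHecke_eigenspace_qE
    {F : Type} [Field F] [Fintype F] (hq : Odd (Fintype.card F)) {n : ℕ}
    (𝓕 : Set (Submodule F (Fin (2 * n) → F)))
    (h𝓕 : 𝓕 = {C : Submodule F (Fin (2 * n) → F) | C = dualCode (id : F → F) C})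
    (h𝓕ne : 𝓕.Nonempty)
    (m : ℕ) (hm : m ≤ n) :
    YmSet 𝓕 m = {v : ClassesB 𝓕 → ℂ | heckeT 𝓕 n 1 v =
      ((((Fintype.card F : ℂ) ^ (n - m) - (Fintype.card F : ℂ) ^ m) /
        ((Fintype.card F : ℂ) - 1)) • v)} := by
  obtain rfl := h𝓕.trans selfDualSubspaces_euclideanForm.symm
  exact kneserHecke_eigenspace_qE_general (two_ne_zero_of_odd_card hq) isSymm_euclideanForm
    nondegenerate_euclideanForm permInvariant_selfDualSubspaces hm
end
end

section
/- Let q = r² for a prime power r, let C = C^⊥ ≤ F_q^{2n} be a Hermitian self-dual code, let 0 ≤ m ≤ n, and let c^(1), …, c^(m) ∈ C be linearly independent. Then Σ_E #{D ≤ F_q^{2n} : D = D^⊥ and D ∩ C = E} = r·(q^{n−m} − 1)/(q − 1), where the sum runs over all subspaces E ≤ C with dim E = n−1 and c^(i) ∈ E for all i. -/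
noncomputable section

open KneserHeckeCodes

/-!
The self-dual codes `D` whose intersection with `L` is a hyperplane of `L` containing the span `W`
of the given vectors are counted through the isotropic vectors of `W^⊥ \ L`. On the one hand each
such vector lies in exactly one such `D`, so the isotropic vectors are the disjoint union of the
sets `D \ L`, each of size `|L| (q - 1) / q`. On the other hand, in a coset `x + L` the equation
`b(x + c, x + c) = 0` says that the trace of `b(x, c)` from `F_q` to `F_r` equals
`-b(x, x) ∈ F_r`. As `c ↦ b(x, c)` maps `L` onto `F_q` when `x ∉ L`, exactly one in `r` of the
vectors of `W^⊥ \ L` is isotropic.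
-/

namespace KneserHeckeCodes

open Module Polynomial
open scoped Pointwise

section Counting

lemma ncard_mul_eq_of_ncard_fiber_mul_eq {α β : Type*} [Finite α] [Finite β] {s : Set α}
    {t : Set β} {f : α → β} (hf : Set.MapsTo f s t) {a k : ℕ}
    (hfiber : ∀ b ∈ t, {x ∈ s | f x = b}.ncard * a = k) : s.ncard * a = t.ncard * k := by
  classical
  have := Fintype.ofFinite α
  have := Fintype.ofFinite β
  have hfiber' : ∀ b ∈ t.toFinset, (s.toFinset.filter (f · = b)).card * a = k := fun b hb ↦ by
    rw [← hfiber b (Set.mem_toFinset.1 hb), ← Set.ncard_coe_finset]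
    congr 2
    ext x
    simp
  rw [Set.ncard_eq_toFinset_card', Set.ncard_eq_toFinset_card',
    Finset.card_eq_sum_card_fiberwise (t := t.toFinset) (f := f) (by simpa using hf),
    Finset.sum_mul, Finset.sum_const_nat hfiber']

lemma ncard_fiber_mul_card_range {G H : Type*} [AddGroup G] [AddGroup H] (f : G →+ H) {b : H}
    (hb : b ∈ f.range) : {x | f x = b}.ncard * Nat.card f.range = Nat.card G := by
  obtain ⟨a, rfl⟩ := hb
  rw [← f.ker.card_mul_index, AddSubgroup.index_ker]
  exact congrArg (· * Nat.card f.range) (Nat.card_congr (f.fiberEquivKer a))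

lemma ncard_mul_eq_ncard_of_coset {G : Type*} [AddGroup G] [Finite G] (H : AddSubgroup G)
    {s t : Set G} {a : ℕ} (hst : s ⊆ t) (ht : ∀ x ∈ t, x +ᵥ (H : Set G) ⊆ t)
    (hs : ∀ x ∈ t, (s ∩ (x +ᵥ (H : Set G))).ncard * a = Nat.card H) : s.ncard * a = t.ncard := by
  have hmk (x y : G) : (y : G ⧸ H) = x ↔ y ∈ x +ᵥ (H : Set G) := by
    rw [mem_leftAddCoset_iff, eq_comm, QuotientAddGroup.eq, SetLike.mem_coe]
  have hcount {u : Set G} {b : ℕ} (hut : u ⊆ t)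
      (hu : ∀ x ∈ t, (u ∩ (x +ᵥ (H : Set G))).ncard * b = Nat.card H) :
      u.ncard * b = ((QuotientAddGroup.mk : G → G ⧸ H) '' t).ncard * Nat.card H := by
    refine ncard_mul_eq_of_ncard_fiber_mul_eq (f := QuotientAddGroup.mk)
      (fun x hx ↦ Set.mem_image_of_mem _ (hut hx)) ?_
    rintro _ ⟨x, hx, rfl⟩
    simp only [hmk]
    exact hu x hx
  have ht_coset : ∀ x ∈ t, (t ∩ (x +ᵥ (H : Set G))).ncard * 1 = Nat.card H := fun x hx ↦ by
    rw [Set.inter_eq_right.2 (ht x hx), Set.ncard_vadd_set, mul_one]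
    rfl
  rw [hcount hst hs, ← hcount subset_rfl ht_coset, mul_one]

end Counting

section FiniteField

lemma ncard_pow_add_mul_eq_zero_le {R : Type*} [CommRing R] [IsDomain R] {r : ℕ} (hr : 1 < r)
    (a : R) : {x : R | x ^ r + a * x = 0}.ncard ≤ r := by
  have hdeg : (C a * X : R[X]).degree < (X ^ r : R[X]).degree := by
    rw [degree_X_pow]
    exact (degree_C_mul_X_le a).trans_lt (by exact_mod_cast hr)
  have hnat : (X ^ r + C a * X : R[X]).natDegree = r := by
    rw [natDegree_add_eq_left_of_degree_lt hdeg, natDegree_X_pow]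
  have hne : (X ^ r + C a * X : R[X]) ≠ 0 := ne_zero_of_natDegree_gt (hnat ▸ hr)
  have hroots : (X ^ r + C a * X : R[X]).rootSet R = {x | x ^ r + a * x = 0} := by
    ext x
    simp [mem_rootSet_of_ne hne]
  rw [← hroots]
  exact (ncard_rootSet_le _ R).trans_eq hnat

/-- The additive map `x ↦ x + σ x`, which for an involution `σ` is the trace to its fixed ring. -/
def conjTrace {R : Type*} [Ring R] (σ : R →+* R) : R →+ R := AddMonoidHom.id R + σ

@[simp] lemma conjTrace_apply {R : Type*} [Ring R] (σ : R →+* R) (x : R) :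
    conjTrace σ x = x + σ x := rfl

lemma coe_range_conjTrace_subset {R : Type*} [Ring R] {σ : R →+* R} (hinv : Function.Involutive σ) :
    ((conjTrace σ).range : Set R) ⊆ {x | σ x = x} := by
  rintro _ ⟨x, rfl⟩
  simp [hinv _, add_comm]

variable {K : Type*} [Field K] [Finite K] {r : ℕ} {σ : K →+* K}

lemma exists_ringHom_eq_pow_of_dvd_card (hr : r ∣ Nat.card K) :
    ∃ σ : K →+* K, ∀ x, σ x = x ^ r := by
  have := Fintype.ofFinite K
  obtain ⟨p, _, n, hp, hcard⟩ := FiniteField.card' K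
  rw [Nat.card_eq_fintype_card, hcard, Nat.dvd_prime_pow hp] at hr
  obtain ⟨k, -, rfl⟩ := hr
  have : ExpChar K p := ExpChar.prime hp
  exact ⟨iterateFrobenius K p k, iterateFrobenius_def p k⟩

lemma involutive_of_eq_pow_of_card_eq_sq (hcard : Nat.card K = r ^ 2) (hσ : ∀ x, σ x = x ^ r) :
    Function.Involutive σ := fun x ↦ by
  have := Fintype.ofFinite K
  rw [hσ, hσ, ← pow_mul, ← sq, ← hcard, Nat.card_eq_fintype_card, FiniteField.pow_card]

lemma one_lt_of_card_eq_sq (hcard : Nat.card K = r ^ 2) : 1 < r := by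
  have : 1 < r ^ 2 := hcard ▸ Finite.one_lt_card
  exact (one_lt_pow_iff two_ne_zero).1 this

lemma ncard_fixed_le (hcard : Nat.card K = r ^ 2) (hσ : ∀ x, σ x = x ^ r) :
    {x | σ x = x}.ncard ≤ r := by
  simpa [hσ, ← sub_eq_add_neg, sub_eq_zero] using
    ncard_pow_add_mul_eq_zero_le (one_lt_of_card_eq_sq hcard) (-1 : K)

lemma le_natCard_range_conjTrace (hcard : Nat.card K = r ^ 2) (hσ : ∀ x, σ x = x ^ r) :
    r ≤ Nat.card (conjTrace σ).range := by
  have hr := one_lt_of_card_eq_sq hcard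
  have hset : ((conjTrace σ).ker : Set K) = {x | x ^ r + 1 * x = 0} := by
    ext x
    simp [AddMonoidHom.mem_ker, hσ, add_comm]
  have hker : Nat.card (conjTrace σ).ker ≤ r :=
    (congrArg Set.ncard hset).trans_le (ncard_pow_add_mul_eq_zero_le hr 1)
  have hprod : Nat.card (conjTrace σ).ker * Nat.card (conjTrace σ).range = r ^ 2 := by
    rw [← AddSubgroup.index_ker, AddSubgroup.card_mul_index, hcard]
  nlinarith

lemma coe_range_conjTrace (hcard : Nat.card K = r ^ 2) (hσ : ∀ x, σ x = x ^ r) :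
    ((conjTrace σ).range : Set K) = {x | σ x = x} :=
  Set.eq_of_subset_of_ncard_le
    (coe_range_conjTrace_subset (involutive_of_eq_pow_of_card_eq_sq hcard hσ))
    ((ncard_fixed_le hcard hσ).trans (le_natCard_range_conjTrace hcard hσ))

lemma natCard_range_conjTrace (hcard : Nat.card K = r ^ 2) (hσ : ∀ x, σ x = x ^ r) :
    Nat.card (conjTrace σ).range = r :=
  ((congrArg Set.ncard (coe_range_conjTrace hcard hσ)).trans_le (ncard_fixed_le hcard hσ)).antisymm
    (le_natCard_range_conjTrace hcard hσ)

end FiniteField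

section Reflexive

variable {K V : Type*} [Field K] [AddCommGroup V] [Module K V] {σ : K →+* K}

lemma finrank_map_of_injective [RingHomSurjective σ] {V' : Type*} [AddCommGroup V'] [Module K V']
    {f : V →ₛₗ[σ] V'} (hf : Function.Injective f) (S : Submodule K V) :
    finrank K (S.map f) = finrank K S := by
  have : Free K (S.map f) := .of_divisionRing K _
  rw [finrank_eq_spanFinrank_of_free, finrank_eq_spanFinrank_of_free, Submodule.spanFinrank_top,
    Submodule.spanFinrank_top, Submodule.spanFinrank_map_eq_of_injective f hf]

lemma finrank_add_finrank_orthogonalBilin [FiniteDimensional K V] [RingHomSurjective σ]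
    {V₁ : Type*} [AddCommGroup V₁] [Module K V₁] {B : V₁ →ₛₗ[σ] V →ₗ[K] K}
    (hB : B.SeparatingLeft) (S : Submodule K V₁) :
    finrank K S + finrank K (S.orthogonalBilin B) = finrank K V := by
  have hinj : Function.Injective B :=
    LinearMap.ker_eq_bot.1 (LinearMap.separatingLeft_iff_ker_eq_bot.1 hB)
  have horth : S.orthogonalBilin B = (S.map B).dualCoannihilator := by
    ext y
    simp [Submodule.mem_dualCoannihilator]
  rw [horth, ← finrank_map_of_injective hinj S, Subspace.finrank_add_finrank_dualCoannihilator_eq]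

variable (B : V →ₛₗ[σ] V →ₗ[K] K) (L : Submodule K V)

/-- A subspace equal to its own orthogonal complement. -/
def IsSelfDual : Prop := L = L.orthogonalBilin B

/-- The neighbour of `L` through the vector `x`: the span of `x` and the vectors of `L` orthogonal
to it. -/
def neighborThrough (x : V) : Submodule K V := (L ⊓ LinearMap.ker (B x)) ⊔ Submodule.span K {x}

/-- The neighbours of `L` in the sense of Kneser, i.e. the self-dual subspaces meeting `L` in a
hyperplane of `L`, that contain `W`. -/
def neighborsContaining (W : Submodule K V) : Set (Submodule K V) :=
  {D | IsSelfDual B D ∧ finrank K ↥(D ⊓ L) + 1 = finrank K L ∧ W ≤ D}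

variable {B L} {x y : V} {W D : Submodule K V}

lemma IsSelfDual.apply_eq_zero (hL : IsSelfDual B L) (hx : x ∈ L) (hy : y ∈ L) : B x y = 0 :=
  hL.le hy x hx

lemma IsSelfDual.le_orthogonalBilin (hL : IsSelfDual B L) (hW : W ≤ L) :
    L ≤ W.orthogonalBilin B :=
  hL.le.trans (Submodule.orthogonalBilin_le hW)

lemma neighborThrough_inf (hx : x ∉ L) : neighborThrough B L x ⊓ L = L ⊓ LinearMap.ker (B x) := by
  rw [neighborThrough, sup_inf_assoc_of_le _ inf_le_left,
    (Submodule.disjoint_span_singleton_of_notMem hx).symm.eq_bot, sup_bot_eq]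

lemma mem_neighborThrough_self (B : V →ₛₗ[σ] V →ₗ[K] K) (L : Submodule K V) (x : V) :
    x ∈ neighborThrough B L x :=
  Submodule.mem_sup_right (Submodule.mem_span_singleton_self x)

lemma neighborThrough_le_orthogonalBilin (hB : B.IsRefl) (hL : IsSelfDual B L)
    (hxx : B x x = 0) :
    neighborThrough B L x ≤ (neighborThrough B L x).orthogonalBilin B := by
  intro y hy z hz
  obtain ⟨y₁, hy₁, y₂, hy₂, rfl⟩ := Submodule.mem_sup.1 hy
  obtain ⟨z₁, hz₁, z₂, hz₂, rfl⟩ := Submodule.mem_sup.1 hz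
  obtain ⟨a, rfl⟩ := Submodule.mem_span_singleton.1 hy₂
  obtain ⟨b, rfl⟩ := Submodule.mem_span_singleton.1 hz₂
  have hzy : B z₁ y₁ = 0 := hL.apply_eq_zero hz₁.1 hy₁.1
  have hxy : B x y₁ = 0 := hy₁.2
  have hzx : B z₁ x = 0 := hB _ _ hz₁.2
  simp [hzy, hxy, hzx, hxx]

lemma IsSelfDual.domRestrict_ne_zero (hL : IsSelfDual B L) (hB : B.IsRefl) (hx : x ∉ L) :
    (B x).domRestrict L ≠ 0 := by
  contrapose! hx
  exact hL.ge fun y hy ↦ hB _ _ (LinearMap.congr_fun hx ⟨y, hy⟩)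

lemma natCard_pairs_eq_ncard_neighborsContaining {ι : Type*} {c : ι → V} (hc : ∀ i, c i ∈ L) :
    Nat.card {ED : Submodule K V × Submodule K V // ED.1 ≤ L ∧ finrank K ED.1 + 1 = finrank K L ∧
      (∀ i, c i ∈ ED.1) ∧ IsSelfDual B ED.2 ∧ ED.2 ⊓ L = ED.1} =
      (neighborsContaining B L (Submodule.span K (Set.range c))).ncard := by
  rw [← Set.ncard_image_of_injective (f := fun D ↦ (D ⊓ L, D)) _
    fun D D' h ↦ congrArg Prod.snd h]
  refine congrArg Set.ncard (Set.ext fun ⟨E, D⟩ ↦ ⟨?_, ?_⟩)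
  · rintro ⟨-, hdim, hcE, hD, hE : D ⊓ L = E⟩
    subst hE
    exact ⟨D, ⟨hD, hdim, Submodule.span_le.2 (Set.range_subset_iff.2 fun i ↦ (hcE i).1)⟩, rfl⟩
  · rintro ⟨_, ⟨hD, hdim, hspan⟩, ⟨⟩⟩
    have hcD (i : ι) : c i ∈ D := hspan (Submodule.subset_span ⟨i, rfl⟩)
    exact ⟨inf_le_right, hdim, fun i ↦ ⟨hcD i, hc i⟩, hD, rfl⟩

variable [FiniteDimensional K V]

lemma IsSelfDual.finrank_inf_ker_add_one (hL : IsSelfDual B L) (hB : B.IsRefl) (hx : x ∉ L) :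
    finrank K ↥(L ⊓ LinearMap.ker (B x)) + 1 = finrank K L := by
  rw [← Dual.finrank_ker_add_one_of_ne_zero (hL.domRestrict_ne_zero hB hx),
    ← Submodule.finrank_map_subtype_eq L, ← Submodule.map_comap_subtype]
  rfl

lemma IsSelfDual.finrank_neighborThrough (hL : IsSelfDual B L) (hB : B.IsRefl) (hx : x ∉ L) :
    finrank K (neighborThrough B L x) = finrank K L := by
  rw [neighborThrough, Submodule.finrank_sup_span_singleton fun h ↦ hx (Submodule.mem_inf.1 h).1,
    hL.finrank_inf_ker_add_one hB hx]

variable [RingHomSurjective σ]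

lemma IsSelfDual.finrank_add_self (hL : IsSelfDual B L) (hsep : B.SeparatingLeft) :
    finrank K L + finrank K L = finrank K V := by
  have := finrank_add_finrank_orthogonalBilin hsep L
  rwa [← hL] at this

lemma isSelfDual_of_le_of_finrank (hsep : B.SeparatingLeft) (hle : L ≤ L.orthogonalBilin B)
    (hdim : finrank K L + finrank K L = finrank K V) : IsSelfDual B L := by
  have := finrank_add_finrank_orthogonalBilin hsep L
  exact Submodule.eq_of_le_of_finrank_eq hle (by omega)

lemma IsSelfDual.isSelfDual_neighborThrough (hL : IsSelfDual B L) (hB : B.IsRefl)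
    (hsep : B.SeparatingLeft) (hx : x ∉ L) (hxx : B x x = 0) :
    IsSelfDual B (neighborThrough B L x) := by
  refine isSelfDual_of_le_of_finrank hsep (neighborThrough_le_orthogonalBilin hB hL hxx) ?_
  rw [hL.finrank_neighborThrough hB hx, hL.finrank_add_self hsep]

lemma IsSelfDual.finrank_eq (hD : IsSelfDual B D) (hL : IsSelfDual B L)
    (hsep : B.SeparatingLeft) : finrank K D = finrank K L := by
  have := hD.finrank_add_self hsep
  have := hL.finrank_add_self hsep
  omega

lemma neighborThrough_mem_neighborsContaining (hL : IsSelfDual B L) (hB : B.IsRefl)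
    (hsep : B.SeparatingLeft) (hW : W ≤ L) (hx : x ∉ L) (hxW : x ∈ W.orthogonalBilin B)
    (hxx : B x x = 0) : neighborThrough B L x ∈ neighborsContaining B L W := by
  refine ⟨hL.isSelfDual_neighborThrough hB hsep hx hxx, ?_, fun w hw ↦ ?_⟩
  · rw [neighborThrough_inf hx, hL.finrank_inf_ker_add_one hB hx]
  · exact Submodule.mem_sup_left ⟨hW hw, hB _ _ (hxW w hw)⟩

lemma neighborThrough_eq_of_mem (hL : IsSelfDual B L) (hB : B.IsRefl) (hsep : B.SeparatingLeft)
    (hD : D ∈ neighborsContaining B L W) (hxD : x ∈ D) (hx : x ∉ L) :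
    neighborThrough B L x = D := by
  obtain ⟨hself, hdim, -⟩ := hD
  have hinf : D ⊓ L = L ⊓ LinearMap.ker (B x) := by
    refine Submodule.eq_of_le_of_finrank_eq
      (fun y hy ↦ ⟨hy.2, hself.apply_eq_zero hxD hy.1⟩) ?_
    have := hL.finrank_inf_ker_add_one hB hx
    omega
  refine Submodule.eq_of_le_of_finrank_eq ?_ ?_
  · rw [neighborThrough, ← hinf]
    exact sup_le inf_le_left ((Submodule.span_singleton_le_iff_mem x D).2 hxD)
  · rw [hL.finrank_neighborThrough hB hx, hself.finrank_eq hL hsep]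

lemma neighborThrough_fiber (hL : IsSelfDual B L) (hB : B.IsRefl) (hsep : B.SeparatingLeft)
    (hD : D ∈ neighborsContaining B L W) :
    {x ∈ {x ∈ (W.orthogonalBilin B : Set V) \ L | B x x = 0} | neighborThrough B L x = D} =
      (D : Set V) \ L := by
  ext x
  refine ⟨?_, fun ⟨hxD, hxL⟩ ↦ ⟨⟨⟨?_, hxL⟩, ?_⟩, neighborThrough_eq_of_mem hL hB hsep hD hxD hxL⟩⟩
  · rintro ⟨⟨⟨-, hxL⟩, -⟩, rfl⟩
    exact ⟨mem_neighborThrough_self B L x, hxL⟩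
  · exact hD.1.le_orthogonalBilin hD.2.2 hxD
  · exact hD.1.apply_eq_zero hxD hxD

lemma IsSelfDual.natCard_orthogonalBilin (hL : IsSelfDual B L) (hsep : B.SeparatingLeft)
    (hW : W ≤ L) :
    Nat.card (W.orthogonalBilin B) = Nat.card L * Nat.card K ^ (finrank K L - finrank K W) := by
  have := finrank_add_finrank_orthogonalBilin hsep W
  have := hL.finrank_add_self hsep
  have := Submodule.finrank_mono hW
  rw [natCard_eq_pow_finrank (K := K), natCard_eq_pow_finrank (K := K) (V := L), ← pow_add]
  congr 1
  omega

variable [Finite K]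

lemma ncard_neighbor_sdiff_mul_card (hL : IsSelfDual B L) (hsep : B.SeparatingLeft)
    (hD : D ∈ neighborsContaining B L W) :
    ((D : Set V) \ L).ncard * Nat.card K = Nat.card L * (Nat.card K - 1) := by
  have := Module.finite_of_finite K (M := V)
  obtain ⟨hself, hdim, -⟩ := hD
  have hdiff : ((D : Set V) \ L).ncard = Nat.card D - Nat.card ↥(D ⊓ L) := by
    rw [← Set.sdiff_inter_self_eq_sdiff, Set.inter_comm]
    exact Set.ncard_sdiff inf_le_left
  rw [hdiff, natCard_eq_pow_finrank (K := K) (V := D), natCard_eq_pow_finrank (K := K) (V := L),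
    natCard_eq_pow_finrank (K := K) (V := ↥(D ⊓ L)), hself.finrank_eq hL hsep, ← hdim, pow_succ,
    ← Nat.mul_sub_one, mul_right_comm]

lemma ncard_isotropic_mul_card (hL : IsSelfDual B L) (hB : B.IsRefl) (hsep : B.SeparatingLeft)
    (hW : W ≤ L) :
    {x ∈ (W.orthogonalBilin B : Set V) \ L | B x x = 0}.ncard * Nat.card K =
      (neighborsContaining B L W).ncard * (Nat.card L * (Nat.card K - 1)) := by
  have := Module.finite_of_finite K (M := V)
  refine ncard_mul_eq_of_ncard_fiber_mul_eq (f := neighborThrough B L) ?_ fun D hD ↦ ?_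
  · exact fun x ⟨⟨hxW, hxL⟩, hxx⟩ ↦
      neighborThrough_mem_neighborsContaining hL hB hsep hW hxL hxW hxx
  · rw [neighborThrough_fiber hL hB hsep hD, ncard_neighbor_sdiff_mul_card hL hsep hD]

end Reflexive

section Hermitian

variable {K V : Type*} [Field K] [Finite K] [AddCommGroup V] [Module K V] {σ : K →+* K}
  {B : V →ₛₗ[σ] V →ₗ[K] K} {L U W : Submodule K V} {r : ℕ} {x : V}

lemma ncard_isotropic_coset_mul (hcard : Nat.card K = r ^ 2) (hσ : ∀ x, σ x = x ^ r)
    (hB : B.IsSymm) (hL : IsSelfDual B L) (hx : x ∉ L) :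
    {y ∈ x +ᵥ (L : Set V) | B y y = 0}.ncard * r = Nat.card L := by
  let P : L →+ K := (conjTrace σ).comp ((B x).domRestrict L).toAddMonoidHom
  have hP (c : L) : B (x + c) (x + c) = 0 ↔ P c = -B x x := by
    have hcc : B (c : V) c = 0 := hL.apply_eq_zero c.2 c.2
    have hexpand : B (x + c) (x + c) = P c + B x x := by
      simp only [P, map_add, LinearMap.add_apply, ← hB.eq x c, hcc, add_zero,
        AddMonoidHom.coe_comp, LinearMap.toAddMonoidHom_coe, Function.comp_apply,
        LinearMap.domRestrict_apply, conjTrace_apply]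
      ring
    rw [hexpand, eq_neg_iff_add_eq_zero]
  have hPrange : P.range = (conjTrace σ).range := by
    have hsurj := LinearMap.surjective (hL.domRestrict_ne_zero hB.isRefl hx)
    rw [AddMonoidHom.range_comp, AddMonoidHom.range_eq_top.2 hsurj, AddMonoidHom.range_eq_map]
  have hmem : -B x x ∈ P.range := by
    rw [hPrange, ← SetLike.mem_coe, coe_range_conjTrace hcard hσ, Set.mem_ofPred_eq, map_neg,
      hB.eq]
  have hset : {y ∈ x +ᵥ (L : Set V) | B y y = 0} = (fun c : L ↦ x + c) '' {c | P c = -B x x} := by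
    ext y
    constructor
    · rintro ⟨⟨c, hc, rfl⟩, hy⟩
      exact ⟨⟨c, hc⟩, (hP _).1 hy, rfl⟩
    · rintro ⟨c, hc, rfl⟩
      exact ⟨⟨c, c.2, rfl⟩, (hP c).2 hc⟩
  rw [hset, Set.ncard_image_of_injective _ fun c d h ↦ Subtype.ext (add_left_cancel h),
    ← ncard_fiber_mul_card_range P hmem, hPrange, natCard_range_conjTrace hcard hσ]

lemma ncard_isotropic_sdiff_mul [FiniteDimensional K V] (hcard : Nat.card K = r ^ 2)
    (hσ : ∀ x, σ x = x ^ r) (hB : B.IsSymm) (hL : IsSelfDual B L) (hLU : L ≤ U) :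
    {x ∈ (U : Set V) \ L | B x x = 0}.ncard * r = ((U : Set V) \ L).ncard := by
  have := Module.finite_of_finite K (M := V)
  have hcoset : ∀ x ∈ (U : Set V) \ L, x +ᵥ (L : Set V) ⊆ (U : Set V) \ L := by
    rintro x ⟨hxU, hxL⟩ _ ⟨c, hc, rfl⟩
    exact ⟨U.add_mem hxU (hLU hc), fun h ↦ hxL ((L.add_mem_iff_left hc).1 h)⟩
  refine ncard_mul_eq_ncard_of_coset L.toAddSubgroup (Set.sep_subset _ _) hcoset fun x hx ↦ ?_
  have hset : {y ∈ (U : Set V) \ L | B y y = 0} ∩ (x +ᵥ (L : Set V)) =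
      {y ∈ x +ᵥ (L : Set V) | B y y = 0} :=
    Set.ext fun y ↦ ⟨fun hy ↦ ⟨hy.2, hy.1.2⟩, fun hy ↦ ⟨⟨hcoset x hx hy.1, hy.2⟩, hy.1⟩⟩
  exact (congrArg (Set.ncard · * r) hset).trans (ncard_isotropic_coset_mul hcard hσ hB hL hx.2)

lemma ncard_neighborsContaining_mul [FiniteDimensional K V] [RingHomSurjective σ]
    (hcard : Nat.card K = r ^ 2) (hσ : ∀ x, σ x = x ^ r) (hB : B.IsSymm) (hsep : B.SeparatingLeft)
    (hL : IsSelfDual B L) (hW : W ≤ L) :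
    (neighborsContaining B L W).ncard * (Nat.card K - 1) =
      r * (Nat.card K ^ (finrank K L - finrank K W) - 1) := by
  have := Module.finite_of_finite K (M := V)
  have hLU := hL.le_orthogonalBilin hW
  have hdiff : ((W.orthogonalBilin B : Set V) \ L).ncard =
      Nat.card L * (Nat.card K ^ (finrank K L - finrank K W) - 1) := by
    rw [Nat.mul_sub_one, ← hL.natCard_orthogonalBilin hsep hW]
    exact Set.ncard_sdiff hLU
  set isotropic := {x ∈ (W.orthogonalBilin B : Set V) \ L | B x x = 0}
  refine Nat.eq_of_mul_eq_mul_left (Nat.card_pos (α := L)) ?_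
  calc Nat.card L * ((neighborsContaining B L W).ncard * (Nat.card K - 1))
    _ = (neighborsContaining B L W).ncard * (Nat.card L * (Nat.card K - 1)) := mul_left_comm _ _ _
    _ = isotropic.ncard * Nat.card K := (ncard_isotropic_mul_card hL hB.isRefl hsep hW).symm
    _ = r * (isotropic.ncard * r) := by rw [hcard]; ring
    _ = r * ((W.orthogonalBilin B : Set V) \ L).ncard := by
      rw [ncard_isotropic_sdiff_mul hcard hσ hB hL hLU]
    _ = Nat.card L * (r * (Nat.card K ^ (finrank K L - finrank K W) - 1)) := by
      rw [hdiff, mul_left_comm]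

end Hermitian

section HermitianForm

variable {K : Type*} [Field K] (ι : Type*) [Fintype ι] (σ : K →+* K)

/-- The standard sesquilinear form on `ι → K` with conjugation `σ`. It is semilinear in its first
argument, so it is `b(y, x)` for the form `b(x, y) = ∑ i, x i * σ (y i)` defining `dualCode`. -/
def hermitianForm : (ι → K) →ₛₗ[σ] (ι → K) →ₗ[K] K :=
  LinearMap.mk₂'ₛₗ σ (RingHom.id K) (fun x y ↦ y ⬝ᵥ (σ ∘ x))
    (fun x x' y ↦ by simp [dotProduct, mul_add, Finset.sum_add_distrib])
    (fun a x y ↦ by simp [dotProduct, Finset.mul_sum, mul_left_comm])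
    (fun _ _ _ ↦ add_dotProduct _ _ _)
    (fun _ _ _ ↦ smul_dotProduct _ _ _)

variable {ι σ}

lemma hermitianForm_isSymm (hσ : Function.Involutive σ) : (hermitianForm ι σ).IsSymm where
  eq x y := by
    calc σ (y ⬝ᵥ (σ ∘ x))
      _ = (σ ∘ y) ⬝ᵥ (σ ∘ σ ∘ x) := RingHom.map_dotProduct σ y (σ ∘ x)
      _ = x ⬝ᵥ (σ ∘ y) := by rw [← Function.comp_assoc, hσ.comp_self, Function.id_comp,
        dotProduct_comm]

lemma hermitianForm_separatingLeft : (hermitianForm ι σ).SeparatingLeft := by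
  classical
  intro x hx
  funext i
  have hi : Pi.single i 1 ⬝ᵥ (σ ∘ x) = 0 := hx (Pi.single i 1)
  simpa using hi

lemma isSelfDual_hermitianForm_iff {F : Type} [Field F] {N : ℕ} {σ : F →+* F}
    {C : Submodule F (Fin N → F)} :
    IsSelfDual (hermitianForm (Fin N) σ) C ↔ C = dualCode σ C :=
  Iff.rfl

end HermitianForm

end KneserHeckeCodes

theorem sum_alphaE_qH_general {K V ι : Type*} [Field K] [Finite K] [AddCommGroup V] [Module K V]
    [FiniteDimensional K V] [Fintype ι] {r : ℕ} (hcard : Nat.card K = r ^ 2) {σ : K →+* K}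
    (hσ : ∀ x, σ x = x ^ r) {B : V →ₛₗ[σ] V →ₗ[K] K} (hB : B.IsSymm) (hsep : B.SeparatingLeft)
    {n : ℕ} (hn : Module.finrank K V = 2 * n) {L : Submodule K V} (hL : IsSelfDual B L)
    {c : ι → V} (hc : ∀ i, c i ∈ L) (hind : LinearIndependent K c) :
    Nat.card {ED : Submodule K V × Submodule K V //
        ED.1 ≤ L ∧ Module.finrank K ED.1 + 1 = n ∧ (∀ i, c i ∈ ED.1) ∧
        IsSelfDual B ED.2 ∧ ED.2 ⊓ L = ED.1} =
      r * ((Nat.card K ^ (n - Fintype.card ι) - 1) / (Nat.card K - 1)) := by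
  have : RingHomSurjective σ := ⟨Finite.injective_iff_surjective.1 σ.injective⟩
  obtain rfl : Module.finrank K L = n := by
    have := hL.finrank_add_self hsep
    omega
  have hspan : Submodule.span K (Set.range c) ≤ L :=
    Submodule.span_le.2 (Set.range_subset_iff.2 hc)
  have hcount := ncard_neighborsContaining_mul hcard hσ hB hsep hL hspan
  rw [finrank_span_eq_card hind] at hcount
  rw [natCard_pairs_eq_ncard_neighborsContaining hc,
    ← Nat.mul_div_assoc r (Nat.sub_one_dvd_pow_sub_one _ _), ← hcount,
    Nat.mul_div_cancel _ (Nat.sub_pos_of_lt Finite.one_lt_card)]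

/-- For `q = r²`, a Hermitian self-dual code `C ≤ F_q^{2n}` and linearly
independent `c^(1), …, c^(m) ∈ C` (`m ≤ n`), the number of pairs `(E, D)` with `E ≤ C`
of dimension `n-1` containing all `c^(i)` and `D` Hermitian self-dual with `D ∩ C = E`
equals `r·(q^{n-m} - 1)/(q - 1)`. -/
theorem sum_alphaE_qH
    {F : Type} [Field F] [Fintype F] (r : ℕ) (hr : IsPrimePow r)
    (hcard : Fintype.card F = r ^ 2) {n : ℕ}
    (C : Submodule F (Fin (2 * n) → F)) (hC : C = dualCode (fun x : F => x ^ r) C)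
    {m : ℕ} (hm : m ≤ n) (c : Fin m → (Fin (2 * n) → F)) (hc : ∀ j, c j ∈ C)
    (hind : LinearIndependent F c) :
    Nat.card {ED : Submodule F (Fin (2 * n) → F) × Submodule F (Fin (2 * n) → F) //
        ED.1 ≤ C ∧ Module.finrank F ↥ED.1 + 1 = n ∧ (∀ j, c j ∈ ED.1) ∧
        ED.2 = dualCode (fun x : F => x ^ r) ED.2 ∧ ED.2 ⊓ C = ED.1} =
      r * ((Fintype.card F ^ (n - m) - 1) / (Fintype.card F - 1)) := by
  have hcard' : Nat.card F = r ^ 2 := Nat.card_eq_fintype_card.trans hcard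
  obtain ⟨σ, hσ⟩ := exists_ringHom_eq_pow_of_dvd_card (hcard' ▸ dvd_pow_self r two_ne_zero)
  have hpow : (fun x : F ↦ x ^ r) = σ := funext fun x ↦ (hσ x).symm
  have hsymm : (hermitianForm (Fin (2 * n)) σ).IsSymm :=
    hermitianForm_isSymm (involutive_of_eq_pow_of_card_eq_sq hcard' hσ)
  rw [hpow, ← isSelfDual_hermitianForm_iff] at hC
  simpa only [hpow, isSelfDual_hermitianForm_iff, Fintype.card_fin, Nat.card_eq_fintype_card] using
    sum_alphaE_qH_general hcard' hσ hsymm hermitianForm_separatingLeft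
      (Module.finrank_fin_fun F) hC hc hind
end
end

section
/- Let C_1, …, C_k ≤ F_q^N be pairwise inequivalent self-dual codes, where N = 2n. Then their genus-n complete weight enumerators cwe_n(C_1), …, cwe_n(C_k) are linearly independent over ℂ. -/
noncomputable section

open KneserHeckeCodes

/-!
A generating tuple `c` of `C` is determined up to a coordinate permutation by `mon c`, because two
matrices with the same columns, counted with multiplicity, differ by a permutation of the columns.
Hence the coefficient at `mon c` of the enumerator of another code `D` vanishes unless `D` contains
a code equivalent to `C`; in particular it vanishes when `dim D ≤ dim C` and `D` is not equivalent
to `C`. Ordered by dimension, the enumerators of inequivalent codes thus have a triangular matrix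
of coefficients with nonzero diagonal. This applies in genus `n` to self-dual codes of length `2n`,
which have dimension `n` and hence a generating `n`-tuple.
-/

section LinearAlgebra

open Module

theorem linearIndependent_of_triangular {R V ι α : Type*} [Ring R] [NoZeroDivisors R]
    [AddCommGroup V] [Module R V] [Preorder α] (v : ι → V) (φ : ι → V →ₗ[R] R) (r : ι → α)
    (hdiag : ∀ i, φ i (v i) ≠ 0) (htri : ∀ i j, i ≠ j → φ i (v j) ≠ 0 → r i < r j) :
    LinearIndependent R v := by
  classical
  rw [linearIndependent_iff']
  intro s g hsum
  by_contra! ⟨k, hks, hgk⟩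
  obtain ⟨i, hi, hmax⟩ := (s.filter (g · ≠ 0)).exists_maximalFor r
    ⟨k, Finset.mem_filter.mpr ⟨hks, hgk⟩⟩
  obtain ⟨his, hgi⟩ := Finset.mem_filter.mp hi
  have hoff (j : ι) (hj : j ∈ s) (hji : j ≠ i) : g j * φ i (v j) = 0 := by
    by_contra hne
    obtain ⟨hgj, hφ⟩ := mul_ne_zero_iff.mp hne
    have hlt := htri i j hji.symm hφ
    exact hlt.not_ge (hmax (Finset.mem_filter.mpr ⟨hj, hgj⟩) hlt.le)
  have hφsum : ∑ j ∈ s, g j * φ i (v j) = 0 := by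
    simpa only [map_sum, map_smul, smul_eq_mul, map_zero] using congrArg (φ i) hsum
  rw [Finset.sum_eq_single_of_mem i his hoff] at hφsum
  exact mul_ne_zero hgi (hdiag i) hφsum

theorem exists_fin_span_range_eq {K V : Type*} [DivisionRing K] [AddCommGroup V] [Module K V]
    (p : Submodule K V) [Module.Finite K p] {m : ℕ} (hp : finrank K p ≤ m) :
    ∃ c : Fin m → V, Submodule.span K (Set.range c) = p := by
  let b := finBasis K p
  have hb : Submodule.span K (Set.range (p.subtype ∘ b)) = p := by
    rw [Set.range_comp, ← Submodule.map_span, b.span_eq, Submodule.map_subtype_top]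
  refine ⟨Function.extend (Fin.castLE hp) (p.subtype ∘ b) 0, ?_⟩
  rw [Set.range_extend (Fin.castLE_injective hp), Submodule.span_union, hb, sup_eq_left,
    Submodule.span_le]
  rintro _ ⟨_, _, rfl⟩
  exact p.zero_mem

theorem mulVec_map_surjective {R S m n : Type*} [Semiring R] [Semiring S] [Finite m] [Fintype n]
    (σ : R →+* S) {A : Matrix m n R} (hA : Function.Surjective A.mulVec) :
    Function.Surjective (A.map σ).mulVec := by
  classical
  obtain ⟨B, hB⟩ := Matrix.mulVec_surjective_iff_exists_right_inverse.mp hA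
  refine Matrix.mulVec_surjective_iff_exists_right_inverse.mpr ⟨B.map σ, ?_⟩
  rw [← Matrix.map_mul, hB, Matrix.map_one σ σ.map_zero σ.map_one]

theorem mulVec_surjective_of_linearIndependent_row {K m n : Type*} [Field K] [Finite m]
    [Fintype n] {A : Matrix m n K} (hA : LinearIndependent K A.row) :
    Function.Surjective A.mulVec := by
  cases nonempty_fintype m
  have hrank : finrank K (LinearMap.range A.mulVecLin) = finrank K (m → K) := by
    rw [finrank_fintype_fun_eq_card]
    exact hA.rank_matrix
  exact LinearMap.range_eq_top.mp (Submodule.eq_top_of_finrank_eq hrank)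

end LinearAlgebra

namespace KneserHeckeCodes

open Module

variable {F : Type} [Field F] {m N : ℕ}

theorem dualCode_span_range (σ : F →+* F) (c : Fin m → Fin N → F) :
    dualCode σ (Submodule.span F (Set.range c)) =
      LinearMap.ker ((Matrix.of c).map σ).mulVecLin := by
  ext v
  constructor
  · intro hv
    funext j
    change ∑ i, σ (c j i) * v i = 0
    simpa only [mul_comm] using hv (c j) (Submodule.subset_span ⟨j, rfl⟩)
  · intro hv x hx
    induction hx using Submodule.span_induction with
    | mem x hx =>
      obtain ⟨j, rfl⟩ := hx
      have : ∑ i, σ (c j i) * v i = 0 := congrFun hv j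
      simpa only [mul_comm] using this
    | zero => simp
    | add x y _ _ hx hy => simp [mul_add, Finset.sum_add_distrib, hx, hy]
    | smul a x _ hx => simp [mul_left_comm _ (σ a), ← Finset.mul_sum, hx]

theorem finrank_add_finrank_dualCode (σ : F →+* F) (C : Submodule F (Fin N → F)) :
    finrank F C + finrank F (dualCode σ C) = N := by
  obtain ⟨c, hspan⟩ := exists_fin_span_range_eq C le_rfl
  have hc : LinearIndependent F c := by
    rw [linearIndependent_iff_card_eq_finrank_span, Fintype.card_fin, Set.finrank, hspan]
  have hsurj : Function.Surjective ((Matrix.of c).map σ).mulVec :=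
    mulVec_map_surjective σ (mulVec_surjective_of_linearIndependent_row hc)
  have hrn := LinearMap.finrank_range_add_finrank_ker ((Matrix.of c).map σ).mulVecLin
  rw [← dualCode_span_range, hspan, LinearMap.range_eq_top.mpr hsurj, finrank_top] at hrn
  simpa using hrn

theorem two_mul_finrank_of_eq_dualCode {σ : F →+* F} {C : Submodule F (Fin N → F)}
    (hC : C = dualCode σ C) : 2 * finrank F C = N := by
  have h := finrank_add_finrank_dualCode σ C
  rwa [← hC, ← two_mul] at h

theorem equivCode.finrank_eq {C D : Submodule F (Fin N → F)} (h : equivCode C D) :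
    finrank F C = finrank F D := by
  obtain ⟨π, rfl⟩ := h
  exact (LinearEquiv.finrank_map_eq (LinearEquiv.funCongrLeft F F π) C).symm

theorem exists_funLeft_eq_of_mon_eq {c d : Fin m → Fin N → F} (h : mon c = mon d) :
    ∃ π : Equiv.Perm (Fin N), ∀ j, LinearMap.funLeft F F π (c j) = d j := by
  have hfib (v : Fin m → F) :
      Nonempty ({i // (fun j ↦ d j i) = v} ≃ {i // (fun j ↦ c j i) = v}) := by
    simp only [funext_iff]
    exact Finite.card_eq.mp (congrFun h v).symm
  let e (v : Fin m → F) := (hfib v).some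
  exact ⟨Equiv.ofFiberEquiv e, fun j ↦ funext fun i ↦ congrFun (Equiv.ofFiberEquiv_map e i) j⟩

theorem equivCode_span_range_of_mon_eq {c d : Fin m → Fin N → F} (h : mon c = mon d) :
    equivCode (Submodule.span F (Set.range c)) (Submodule.span F (Set.range d)) := by
  obtain ⟨π, hπ⟩ := exists_funLeft_eq_of_mon_eq h
  refine ⟨π, ?_⟩
  rw [permCode, Submodule.map_span, ← Set.range_comp]
  exact congrArg (fun e ↦ Submodule.span F (Set.range e)) (funext hπ)

theorem aX_ne_zero_iff [Finite F] {X : (Fin m → F) → ℕ} {C : Submodule F (Fin N → F)} :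
    aX X C ≠ 0 ↔ ∃ c : Fin m → Fin N → F, (∀ j, c j ∈ C) ∧ mon c = X := by
  rw [aX, ← Nat.pos_iff_ne_zero, Finite.card_pos_iff, nonempty_subtype]

theorem equivCode_of_aX_mon_ne_zero [Finite F] {c : Fin m → Fin N → F}
    {C D : Submodule F (Fin N → F)} (hspan : Submodule.span F (Set.range c) = C)
    (h : aX (mon c) D ≠ 0) (hdim : finrank F D ≤ finrank F C) : equivCode C D := by
  obtain ⟨d, hd, hmon⟩ := aX_ne_zero_iff.mp h
  have hequiv := equivCode_span_range_of_mon_eq hmon.symm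
  rw [hspan] at hequiv
  have hle : Submodule.span F (Set.range d) ≤ D :=
    Submodule.span_le.mpr (Set.range_subset_iff.mpr hd)
  rwa [Submodule.eq_of_le_of_finrank_le hle (hdim.trans_eq hequiv.finrank_eq)] at hequiv

theorem coeff_cwe [Fintype F] (X : (Fin m → F) → ℕ) (C : Submodule F (Fin N → F)) :
    (cwe m C).coeff (Finsupp.equivFunOnFinite.symm X) = aX X C := by
  classical
  let _ : Fintype C := Fintype.ofFinite C
  let e : {c : Fin m → C // mon (fun j ↦ (c j : Fin N → F)) = X} ≃
      {c : Fin m → Fin N → F // (∀ j, c j ∈ C) ∧ mon c = X} :=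
    { toFun c := ⟨fun j ↦ c.1 j, fun j ↦ (c.1 j).2, c.2⟩
      invFun c := ⟨fun j ↦ ⟨c.1 j, c.2.1 j⟩, c.2.2⟩ }
  rw [aX, ← Nat.card_congr e, Nat.card_eq_fintype_card, Fintype.card_subtype, ← Finset.sum_boole]
  simp only [cwe, MvPolynomial.coeff_sum, MvPolynomial.coeff_monomial,
    EmbeddingLike.apply_eq_iff_eq]

end KneserHeckeCodes

theorem cwe_genus_n_linearIndependent_general {F : Type} [Field F] [Fintype F]
    {ι : Type*} {m N : ℕ} (C : ι → Submodule F (Fin N → F))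
    (hdim : ∀ i, Module.finrank F (C i) ≤ m)
    (hineq : ∀ i j, i ≠ j → ¬ equivCode (C i) (C j)) :
    LinearIndependent ℂ (fun i ↦ cwe m (C i)) := by
  choose c hspan using fun i ↦ exists_fin_span_range_eq (C i) (hdim i)
  refine linearIndependent_of_triangular _
    (fun i ↦ MvPolynomial.lcoeff ℂ (Finsupp.equivFunOnFinite.symm (mon (c i))))
    (fun i ↦ Module.finrank F (C i)) (fun i ↦ ?_) (fun i j hij hcoeff ↦ ?_)
  · have hc (l : Fin m) : c i l ∈ C i := hspan i ▸ Submodule.subset_span ⟨l, rfl⟩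
    rw [MvPolynomial.lcoeff_apply, coeff_cwe]
    exact Nat.cast_ne_zero.mpr (aX_ne_zero_iff.mpr ⟨c i, hc, rfl⟩)
  · rw [MvPolynomial.lcoeff_apply, coeff_cwe] at hcoeff
    by_contra! hle
    exact hineq i j hij (equivCode_of_aX_mon_ne_zero (hspan i) (Nat.cast_ne_zero.mp hcoeff) hle)

/-- The genus-`n` complete weight enumerators of pairwise inequivalent
self-dual codes in `F_q^{2n}` are linearly independent over `ℂ`. -/
theorem cwe_genus_n_linearIndependent
    {F : Type} [Field F] [Fintype F] {n : ℕ}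
    (σ : F →+* F) (hσ : ∀ x, σ (σ x) = x)
    {k : ℕ} (C : Fin k → Submodule F (Fin (2 * n) → F))
    (hsd : ∀ i, C i = dualCode (⇑σ) (C i))
    (hineq : ∀ i j, i ≠ j → ¬ equivCode (C i) (C j)) :
    LinearIndependent ℂ (fun i => cwe n (C i)) :=
  cwe_genus_n_linearIndependent_general C
    (fun i ↦ (Nat.mul_left_cancel two_pos (two_mul_finrank_of_eq_dualCode (hsd i))).le) hineq
end
end
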